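/- arXiv:1907.03333 — 10 statements merged into one kernel-verified Lean document; each statement's English description precedes it below -/
import Mathlib

section
/- For every real number x, the limit lim_{R→∞} ∫_{-R}^{R} e^{i(t³/3 + x t)} dt exists in ℂ; consequently the Airy function Ai(x) = (2π)^{-1} lim_{R→∞} ∫_{-R}^{R} e^{i(t³/3 + x t)} dt is well defined for all real x. -/
open Filter intervalIntegral

/-!
Let `φ` be a real phase and `u` a function vanishing at infinity. Since
`(-i u e^{iφ})' = (φ' u - i u') e^{iφ}`, subtracting this derivative from `e^{iφ}` does not change
the improper integral over `ℝ`, and it replaces the integrand by `(1 - φ' u + i u') e^{iφ}`. The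
latter is absolutely integrable as soon as `u'` is and `u` is close enough to `1 / φ'`. For the Airy
phase `φ' = t² + x` may vanish, but `u = 1 / (1 + t²)` avoids this and leaves the integrable error
`1 - φ' u = (1 - x) / (1 + t²)`.
-/

open MeasureTheory
open scoped Topology

section ImproperIntegral

variable {E : Type*} [NormedAddCommGroup E] [NormedSpace ℝ E] [CompleteSpace E]

theorem tendsto_intervalIntegral_of_hasDerivAt_sub {F f g : ℝ → E} {m n : E}
    (hF : ∀ t, HasDerivAt F (f t - g t) t) (hf : LocallyIntegrable f) (hg : Integrable g)
    (hbot : Tendsto F atBot (𝓝 m)) (htop : Tendsto F atTop (𝓝 n)) :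
    Tendsto (fun p : ℝ × ℝ => ∫ t in p.1..p.2, f t) (atBot ×ˢ atTop)
      (𝓝 (n - m + ∫ t, g t)) := by
  have boundary : Tendsto (fun p : ℝ × ℝ => F p.2 - F p.1) (atBot ×ˢ atTop) (𝓝 (n - m)) :=
    (htop.comp tendsto_snd).sub (hbot.comp tendsto_fst)
  have remainder : Tendsto (fun p : ℝ × ℝ => ∫ t in p.1..p.2, g t) (atBot ×ˢ atTop)
      (𝓝 (∫ t, g t)) :=
    intervalIntegral_tendsto_integral hg tendsto_fst tendsto_snd
  refine (boundary.add remainder).congr fun ⟨a, b⟩ => ?_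
  have hf' : IntervalIntegrable f volume a b :=
    (hf.integrableOn_isCompact isCompact_uIcc).intervalIntegrable
  have hg' : IntervalIntegrable g volume a b := hg.intervalIntegrable
  rw [← integral_eq_sub_of_hasDerivAt (fun t _ => hF t) (hf'.sub hg'), integral_sub hf' hg',
    sub_add_cancel]

end ImproperIntegral

section OscillatoryIntegral

theorem integrable_mul_cexp_I_mul {α : Type*} [MeasurableSpace α] {μ : Measure α}
    {g : α → ℂ} {φ : α → ℝ} (hg : Integrable g μ) (hφ : AEMeasurable φ μ) :
    Integrable (fun t => g t * Complex.exp (Complex.I * φ t)) μ :=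
  hg.mul_bdd (c := 1) (by fun_prop) (.of_forall fun t => (Complex.norm_exp_I_mul_ofReal (φ t)).le)

theorem tendsto_neg_I_mul_mul_cexp_I_mul_zero {α : Type*} {l : Filter α} {u : α → ℂ}
    (φ : α → ℝ) (hu : Tendsto u l (𝓝 0)) :
    Tendsto (fun t => -Complex.I * (u t * Complex.exp (Complex.I * φ t))) l (𝓝 0) := by
  rw [tendsto_zero_iff_norm_tendsto_zero] at hu ⊢
  simpa only [norm_mul, norm_neg, Complex.norm_I, Complex.norm_exp_I_mul_ofReal, one_mul, mul_one]
    using hu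

variable {φ : ℝ → ℝ} {u : ℝ → ℂ}

theorem hasDerivAt_neg_I_mul_mul_cexp_I_mul {φ' t : ℝ} {u' : ℂ}
    (hφ : HasDerivAt φ φ' t) (hu : HasDerivAt u u' t) :
    HasDerivAt (fun s => -Complex.I * (u s * Complex.exp (Complex.I * φ s)))
      ((φ' * u t - Complex.I * u') * Complex.exp (Complex.I * φ t)) t := by
  refine ((hu.mul (hφ.ofReal_comp.const_mul Complex.I).cexp).const_mul (-Complex.I)).congr_deriv ?_
  linear_combination -φ' * u t * Complex.exp (Complex.I * φ t) * Complex.I_sq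

theorem tendsto_intervalIntegral_cexp_I_mul {φ' : ℝ → ℝ} {u' : ℝ → ℂ}
    (hφ : ∀ t, HasDerivAt φ (φ' t) t) (hu : ∀ t, HasDerivAt u (u' t) t)
    (hu_zero : Tendsto u (cocompact ℝ) (𝓝 0)) (hu' : Integrable u')
    (hφu : Integrable fun t => 1 - φ' t * u t) :
    Tendsto (fun p : ℝ × ℝ => ∫ t in p.1..p.2, Complex.exp (Complex.I * φ t)) (atBot ×ˢ atTop)
      (𝓝 (∫ t, (1 - φ' t * u t + Complex.I * u' t) * Complex.exp (Complex.I * φ t))) := by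
  have hφc : Continuous φ := continuous_iff_continuousAt.2 fun t => (hφ t).continuousAt
  have hexp : Continuous fun t => Complex.exp (Complex.I * φ t) := by fun_prop
  have hF (t : ℝ) := (hasDerivAt_neg_I_mul_mul_cexp_I_mul (hφ t) (hu t)).congr_deriv
    (show _ = Complex.exp (Complex.I * φ t) -
      (1 - φ' t * u t + Complex.I * u' t) * Complex.exp (Complex.I * φ t) by ring)
  have hg := integrable_mul_cexp_I_mul (hφu.add (hu'.const_mul Complex.I)) hφc.aemeasurable
  simpa only [sub_zero, zero_add] using
    tendsto_intervalIntegral_of_hasDerivAt_sub hF hexp.locallyIntegrable hg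
      (tendsto_neg_I_mul_mul_cexp_I_mul_zero φ (hu_zero.mono_left atBot_le_cocompact))
      (tendsto_neg_I_mul_mul_cexp_I_mul_zero φ (hu_zero.mono_left atTop_le_cocompact))

end OscillatoryIntegral

section InvOneAddSq

theorem hasDerivAt_inv_one_add_sq (t : ℝ) :
    HasDerivAt (fun s : ℝ => (1 + s ^ 2)⁻¹) (-(2 * t) / (1 + t ^ 2) ^ 2) t := by
  have h : HasDerivAt (fun s : ℝ => 1 + s ^ 2) (2 * t) t := by
    simpa using (hasDerivAt_pow 2 t).const_add 1
  exact h.inv (by positivity)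

theorem tendsto_inv_one_add_sq_cocompact :
    Tendsto (fun t : ℝ => (1 + t ^ 2)⁻¹) (cocompact ℝ) (𝓝 0) := by
  have hsq : Tendsto (fun t : ℝ => t ^ 2) (cocompact ℝ) atTop := by
    simpa only [Function.comp_def, Real.norm_eq_abs, sq_abs] using
      (tendsto_pow_atTop two_ne_zero).comp (tendsto_norm_cocompact_atTop (E := ℝ))
  exact (tendsto_atTop_add_const_left _ 1 hsq).inv_tendsto_atTop

theorem abs_deriv_inv_one_add_sq_le (t : ℝ) :
    |deriv (fun s : ℝ => (1 + s ^ 2)⁻¹) t| ≤ (1 + t ^ 2)⁻¹ := by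
  have hpos : 0 < 1 + t ^ 2 := by positivity
  have hnum : |-(2 * t)| ≤ 1 + t ^ 2 :=
    abs_le.2 ⟨by linarith [sq_nonneg (t - 1)], by linarith [sq_nonneg (t + 1)]⟩
  calc |deriv (fun s : ℝ => (1 + s ^ 2)⁻¹) t| = |-(2 * t)| / (1 + t ^ 2) ^ 2 := by
        rw [(hasDerivAt_inv_one_add_sq t).deriv, abs_div, abs_of_pos (pow_pos hpos 2)]
    _ ≤ (1 + t ^ 2) / (1 + t ^ 2) ^ 2 := by gcongr
    _ = (1 + t ^ 2)⁻¹ := by field_simp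

theorem integrable_deriv_inv_one_add_sq :
    Integrable (deriv fun t : ℝ => (1 + t ^ 2)⁻¹) :=
  integrable_inv_one_add_sq.mono' (aestronglyMeasurable_deriv _ _)
    (.of_forall abs_deriv_inv_one_add_sq_le)

end InvOneAddSq

theorem hasDerivAt_airy_phase (x t : ℝ) :
    HasDerivAt (fun s : ℝ => s ^ 3 / 3 + x * s) (t ^ 2 + x) t := by
  refine (((hasDerivAt_pow 3 t).div_const 3).add ((hasDerivAt_id t).const_mul x)).congr_deriv ?_
  push_cast
  ring

theorem integrable_one_sub_airy_phase_deriv_mul_inv_one_add_sq (x : ℝ) :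
    Integrable fun t : ℝ => 1 - (t ^ 2 + x) * (1 + t ^ 2)⁻¹ := by
  have h (t : ℝ) : 1 - (t ^ 2 + x) * (1 + t ^ 2)⁻¹ = (1 - x) * (1 + t ^ 2)⁻¹ := by
    field_simp
    ring
  simpa only [h] using integrable_inv_one_add_sq.const_mul (1 - x)

theorem airy_limit_exists_general (x : ℝ) :
    ∃ l : ℂ, Tendsto
      (fun p : ℝ × ℝ => ∫ t in p.1..p.2, Complex.exp (Complex.I * ((t : ℂ) ^ 3 / 3 + (x : ℂ) * t)))
      (atBot ×ˢ atTop) (𝓝 l) := by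
  have hu (t : ℝ) := (hasDerivAt_inv_one_add_sq t).differentiableAt.hasDerivAt.ofReal_comp
  have hu_zero : Tendsto (fun t : ℝ => (((1 + t ^ 2)⁻¹ : ℝ) : ℂ)) (cocompact ℝ) (𝓝 0) :=
    mod_cast tendsto_inv_one_add_sq_cocompact.ofReal
  have herror : Integrable fun t : ℝ =>
      (1 : ℂ) - ((t ^ 2 + x : ℝ) : ℂ) * (((1 + t ^ 2)⁻¹ : ℝ) : ℂ) :=
    mod_cast (integrable_one_sub_airy_phase_deriv_mul_inv_one_add_sq x).ofReal (𝕜 := ℂ)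
  have h := tendsto_intervalIntegral_cexp_I_mul (hasDerivAt_airy_phase x) hu hu_zero
    integrable_deriv_inv_one_add_sq.ofReal herror
  exact ⟨_, h.congr fun p => by push_cast; rfl⟩

/-- For every real number `x`, the limit `lim_{R→∞} ∫_{-R}^{R} e^{i(t³/3 + x t)} dt`
exists in `ℂ`, so the Airy function `Ai(x) = (2π)⁻¹ · lim_{R→∞} ∫_{-R}^{R} e^{i(t³/3 + x t)} dt`
is well defined for every real `x`. -/
theorem airy_limit_exists (x : ℝ) :
    ∃ l : ℂ, Filter.Tendsto
      (fun R : ℝ => ∫ t in (-R)..R, Complex.exp (Complex.I * ((t : ℂ)^3 / 3 + (x : ℂ) * t)))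
      Filter.atTop (nhds l) :=
  (airy_limit_exists_general x).imp fun _ h => h.comp (tendsto_neg_atTop_atBot.prodMk tendsto_id)
end

section
/- For every real w > 0, with η = √w one has Ai(w) = (e^{-2η³/3}/(2π)) ∫_{-∞}^{∞} e^{-η u²} e^{i u³/3} du, where the integral is an absolutely convergent Lebesgue integral. -/
open Filter MeasureTheory Real

/-- The Airy function, defined for real `x` by
`Ai(x) = (2π)⁻¹ · lim_{R→∞} ∫_{-R}^{R} e^{i(t³/3 + x t)} dt`. -/
noncomputable def Ai (x : ℝ) : ℂ :=
  ((2 * Real.pi : ℝ)⁻¹ : ℂ) * limUnder Filter.atTop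
    (fun R : ℝ => ∫ t in (-R)..R, Complex.exp (Complex.I * ((t : ℂ)^3 / 3 + (x : ℂ) * t)))

/-!
The integrand `exp (i(z³/3 + wz))` is entire, and at `z = x + iy` it has modulus
`exp (y³/3 - wy) · exp (-yx²)`. By dominated convergence, its integrals over the vertical segments
from `x` to `x + ic` tend to zero as `|x| → ∞`, so Cauchy's theorem moves the line of integration
up to any height `c > 0`, where the integrand is a Gaussian times a phase. The height `c = √w` goes
through the saddle point `i√w`, and there the linear term of the phase vanishes.
-/

section ContourShift

variable {E : Type*} [NormedAddCommGroup E] [NormedSpace ℂ E] {f : ℂ → E} {a b : ℝ}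

theorem intervalIntegral_horizontal_eq_add_vertical
    (hf : DifferentiableOn ℂ f (Complex.im ⁻¹' Set.uIcc a b)) (p q : ℝ) :
    ∫ x in p..q, f (x + a * Complex.I) =
      (∫ x in p..q, f (x + b * Complex.I)) +
        Complex.I •
          ((∫ y in a..b, f (p + y * Complex.I)) - ∫ y in a..b, f (q + y * Complex.I)) := by
  have cauchy := Complex.integral_boundary_rect_eq_zero_of_differentiableOn f ⟨p, a⟩ ⟨q, b⟩
    (hf.mono Set.inter_subset_right)
  rw [← sub_eq_zero, ← cauchy, smul_sub]
  abel

theorem tendsto_intervalIntegral_of_contour_shift {ι : Type*} {l : Filter ι}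
    [l.IsCountablyGenerated] {p q : ι → ℝ}
    (hf : DifferentiableOn ℂ f (Complex.im ⁻¹' Set.uIcc a b))
    (hint : Integrable fun x : ℝ => f (x + b * Complex.I))
    (hside : Tendsto (fun x : ℝ => ∫ y in a..b, f (x + y * Complex.I)) (cocompact ℝ) (nhds 0))
    (hp : Tendsto p l atBot) (hq : Tendsto q l atTop) :
    Tendsto (fun i => ∫ x in p i..q i, f (x + a * Complex.I)) l
      (nhds (∫ x : ℝ, f (x + b * Complex.I))) := by
  have hleft := hside.comp (hp.mono_right atBot_le_cocompact)
  have hright := hside.comp (hq.mono_right atTop_le_cocompact)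
  simpa only [intervalIntegral_horizontal_eq_add_vertical hf, Function.comp_def, sub_zero,
    smul_zero, add_zero] using
    (intervalIntegral_tendsto_integral hint hp hq).add ((hleft.sub hright).const_smul Complex.I)

end ContourShift

/-- The integrand `exp (i(z³/3 + wz))` of the Airy function at `w`, extended to complex `z`. -/
noncomputable def airyIntegrand (w : ℝ) (z : ℂ) : ℂ :=
  Complex.exp (Complex.I * (z ^ 3 / 3 + w * z))

namespace airyIntegrand

theorem differentiable (w : ℝ) : Differentiable ℂ (airyIntegrand w) := by
  unfold airyIntegrand
  fun_prop

theorem apply_add_mul_I (w x y : ℝ) :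
    airyIntegrand w (x + y * Complex.I) = (rexp (y ^ 3 / 3 - w * y) : ℂ) *
      (Complex.exp (-y * x ^ 2) * Complex.exp (Complex.I * (x ^ 3 / 3 + (w - y ^ 2) * x))) := by
  rw [airyIntegrand, Complex.ofReal_exp, ← Complex.exp_add, ← Complex.exp_add]
  congr 1
  push_cast
  linear_combination
    ((Complex.I ^ 2 - 1) * y ^ 3 / 3 + x ^ 2 * y + x * y ^ 2 * Complex.I + w * y) * Complex.I_sq

theorem norm_apply_add_mul_I (w x y : ℝ) :
    ‖airyIntegrand w (x + y * Complex.I)‖ = rexp (y ^ 3 / 3 - w * y) * rexp (-y * x ^ 2) := by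
  have norm_gaussian := Complex.norm_exp_ofReal (-y * x ^ (2 : ℕ))
  have norm_phase := Complex.norm_exp_I_mul_ofReal (x ^ (3 : ℕ) / 3 + (w - y ^ (2 : ℕ)) * x)
  push_cast at norm_gaussian norm_phase
  rw [apply_add_mul_I, norm_mul, norm_mul, norm_gaussian, norm_phase, mul_one,
    Complex.norm_of_nonneg (exp_nonneg _)]

theorem integrable_add_mul_I (w : ℝ) {c : ℝ} (hc : 0 < c) :
    Integrable fun x : ℝ => airyIntegrand w (x + c * Complex.I) :=
  ((integrable_exp_neg_mul_sq hc).const_mul (rexp (c ^ 3 / 3 - w * c))).mono'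
    ((differentiable w).continuous.comp (by fun_prop)).aestronglyMeasurable
    (.of_forall fun x => (norm_apply_add_mul_I w x c).le)

theorem tendsto_cocompact_add_mul_I (w : ℝ) {y : ℝ} (hy : 0 < y) :
    Tendsto (fun x : ℝ => airyIntegrand w (x + y * Complex.I)) (cocompact ℝ) (nhds 0) := by
  have hsq : Tendsto (fun x : ℝ => x ^ 2) (cocompact ℝ) atTop := by
    simpa only [Function.comp_def, norm_eq_abs, sq_abs] using
      (tendsto_pow_atTop two_ne_zero).comp (tendsto_norm_cocompact_atTop (E := ℝ))
  have hgauss : Tendsto (fun x : ℝ => rexp (-y * x ^ 2)) (cocompact ℝ) (nhds 0) :=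
    tendsto_exp_atBot.comp (hsq.const_mul_atTop_of_neg (neg_neg_of_pos hy))
  rw [tendsto_zero_iff_norm_tendsto_zero]
  simpa only [norm_apply_add_mul_I, mul_zero] using hgauss.const_mul (rexp (y ^ 3 / 3 - w * y))

theorem tendsto_integral_vertical (w : ℝ) {c : ℝ} (hc : 0 ≤ c) :
    Tendsto (fun x : ℝ => ∫ y in (0 : ℝ)..c, airyIntegrand w (x + y * Complex.I))
      (cocompact ℝ) (nhds 0) := by
  have : (cocompact ℝ).IsCountablyGenerated := by
    rw [cocompact_eq_atBot_atTop]
    infer_instance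
  have pos_of_mem {y : ℝ} (hy : y ∈ Set.uIoc 0 c) : 0 < y := (Set.uIoc_of_le hc ▸ hy).1
  have hdom (x y : ℝ) (hy : y ∈ Set.uIoc 0 c) :
      ‖airyIntegrand w (x + y * Complex.I)‖ ≤ rexp (y ^ 3 / 3 - w * y) := by
    rw [norm_apply_add_mul_I]
    refine mul_le_of_le_one_right (exp_nonneg _) (exp_le_one_iff.2 ?_)
    exact mul_nonpos_of_nonpos_of_nonneg (neg_nonpos.2 (pos_of_mem hy).le) (sq_nonneg x)
  simpa only [Function.comp_def, intervalIntegral.integral_zero] using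
    intervalIntegral.tendsto_integral_filter_of_dominated_convergence
      (fun y => rexp (y ^ 3 / 3 - w * y))
      (.of_forall fun x =>
        ((differentiable w).continuous.comp (by fun_prop)).aestronglyMeasurable)
      (.of_forall fun x => .of_forall (hdom x))
      (Continuous.intervalIntegrable (by fun_prop) 0 c)
      (.of_forall fun y hy => tendsto_cocompact_add_mul_I w (pos_of_mem hy))

end airyIntegrand

theorem Ai_eq_integral_airyIntegrand (w : ℝ) {c : ℝ} (hc : 0 < c) :
    Ai w = ((2 * π : ℝ)⁻¹ : ℂ) * ∫ x : ℝ, airyIntegrand w (x + c * Complex.I) := by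
  have hlim := tendsto_intervalIntegral_of_contour_shift (a := 0)
    (airyIntegrand.differentiable w).differentiableOn (airyIntegrand.integrable_add_mul_I w hc)
    (airyIntegrand.tendsto_integral_vertical w hc.le) tendsto_neg_atTop_atBot tendsto_id
  simp only [Complex.ofReal_zero, zero_mul, add_zero, id] at hlim
  rw [← hlim.limUnder_eq]
  simp only [Ai, airyIntegrand]

theorem airy_contour_formula_general (w : ℝ) {c : ℝ} (hc : 0 < c) :
    Integrable (fun u : ℝ => Complex.exp (-c * u ^ 2) *
      Complex.exp (Complex.I * (u ^ 3 / 3 + (w - c ^ 2) * u))) ∧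
    Ai w = ((rexp (c ^ 3 / 3 - w * c) / (2 * π) : ℝ) : ℂ) *
      ∫ u : ℝ, Complex.exp (-c * u ^ 2) *
        Complex.exp (Complex.I * (u ^ 3 / 3 + (w - c ^ 2) * u)) := by
  have hunit : IsUnit (rexp (c ^ 3 / 3 - w * c) : ℂ) :=
    (Complex.ofReal_ne_zero.2 (exp_ne_zero _)).isUnit
  have hint := airyIntegrand.integrable_add_mul_I w hc
  have hAi := Ai_eq_integral_airyIntegrand w hc
  simp only [airyIntegrand.apply_add_mul_I] at hint hAi
  refine ⟨(integrable_const_mul_iff hunit _).1 hint, ?_⟩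
  rw [hAi, integral_const_mul]
  push_cast
  ring

/-- For every real `w > 0`, with `η = √w`,
`Ai(w) = (e^{-2η³/3}/(2π)) ∫_{-∞}^{∞} e^{-η u²} e^{i u³/3} du`,
the integral being absolutely convergent. -/
theorem airy_contour_formula (w : ℝ) (hw : 0 < w) :
    MeasureTheory.Integrable
      (fun u : ℝ => Complex.exp (-(Real.sqrt w : ℂ) * (u : ℂ)^2) *
        Complex.exp (Complex.I * (u : ℂ)^3 / 3)) ∧
    Ai w = ((Real.exp (-(2 * (Real.sqrt w)^3 / 3)) / (2 * Real.pi) : ℝ) : ℂ) *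
      ∫ u : ℝ, Complex.exp (-(Real.sqrt w : ℂ) * (u : ℂ)^2) *
        Complex.exp (Complex.I * (u : ℂ)^3 / 3) := by
  have hsq : (w : ℂ) - (√w : ℂ) ^ 2 = 0 := by rw [← Complex.ofReal_pow, sq_sqrt hw.le, sub_self]
  have hexp : √w ^ 3 / 3 - w * √w = -(2 * √w ^ 3 / 3) := by
    linear_combination √w * sq_sqrt hw.le
  simpa only [hsq, hexp, zero_mul, add_zero, mul_div_assoc] using
    airy_contour_formula_general w (sqrt_pos.2 hw)
end

section
/- For all real numbers a ≥ 0 and b, one has -Re((a+ib)^{3/2}) ≤ |b|^{3/2}/√2, where (a+ib)^{3/2} denotes the principal branch of the complex power. -/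
/-!
For `0 ≤ s ≤ 2` and fixed `b`, the function `a ↦ Re ((a + ib) ^ s)` is nondecreasing on `[0, ∞)`:
its derivative is `s * Re ((a + ib) ^ (s - 1))`, and a power of exponent `s - 1 ∈ [-1, 1]` keeps
the right half-plane, where `|arg| ≤ π / 2`, inside itself. Hence the minimum over `a ≥ 0` is the
value on the imaginary axis, `Re ((ib) ^ s) = |b| ^ s * cos (π s / 2)`, and
`cos (3π / 4) = -1 / √2` gives the case `s = 3 / 2`.
-/

open Complex

lemma re_cpow_ofReal_nonneg {z : ℂ} {t : ℝ} (hz : 0 ≤ z.re) (ht : |t| ≤ 1) :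
    0 ≤ (z ^ (t : ℂ)).re := by
  have harg : |z.arg * t| ≤ Real.pi / 2 := by
    rw [abs_mul]
    exact (mul_le_of_le_one_right (abs_nonneg _) ht).trans (abs_arg_le_pi_div_two_iff.mpr hz)
  rw [cpow_ofReal_re]
  exact mul_nonneg (Real.rpow_nonneg (norm_nonneg z) t)
    (Real.cos_nonneg_of_mem_Icc (abs_le.mp harg))

lemma re_ofReal_mul_I_cpow_ofReal (b s : ℝ) :
    ((b * I : ℂ) ^ (s : ℂ)).re = |b| ^ s * Real.cos (Real.pi / 2 * s) := by
  rcases eq_or_ne b 0 with rfl | hb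
  · rcases eq_or_ne s 0 with rfl | hs <;> simp [*]
  · have hcos : Real.cos ((b * I : ℂ).arg * s) = Real.cos (Real.pi / 2 * s) := by
      rcases hb.lt_or_gt with hneg | hpos
      · rw [arg_eq_neg_pi_div_two_iff.mpr (by simpa using hneg), neg_mul, Real.cos_neg]
      · rw [arg_eq_pi_div_two_iff.mpr (by simpa using hpos)]
    rw [cpow_ofReal_re, hcos, norm_mul, norm_I, mul_one, norm_real, Real.norm_eq_abs]

lemma hasDerivAt_re_ofReal_add_cpow {w s : ℂ} {x : ℝ} (hx : x + w ∈ slitPlane) :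
    HasDerivAt (fun x : ℝ ↦ ((x + w) ^ s).re) (s * (x + w) ^ (s - 1)).re x := by
  have hderiv := ((hasDerivAt_id (x : ℂ)).add_const w).cpow_const (c := s) hx
  simpa using hderiv.real_of_complex

lemma monotoneOn_re_ofReal_add_mul_I_cpow {s : ℝ} (hs₀ : 0 ≤ s) (hs₂ : s ≤ 2) (b : ℝ) :
    MonotoneOn (fun x : ℝ ↦ ((x + b * I) ^ (s : ℂ)).re) (Set.Ici 0) := by
  rcases hs₀.eq_or_lt with rfl | hs
  · simpa using monotoneOn_const
  have hcont : ContinuousOn (fun x : ℝ ↦ ((x + b * I) ^ (s : ℂ)).re) (Set.Ici 0) := by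
    intro x hx
    have hpow : ContinuousAt (· ^ (s : ℂ)) (x + b * I) :=
      continuousAt_cpow_const_of_re_pos (Or.inl (by simpa using hx)) (by simpa using hs)
    have hline : ContinuousAt (fun x : ℝ ↦ (x + b * I : ℂ)) x := by fun_prop
    exact (continuous_re.continuousAt.comp (hpow.comp_of_eq hline rfl)).continuousWithinAt
  refine monotoneOn_of_hasDerivWithinAt_nonneg (convex_Ici 0) hcont
    (f' := fun x ↦ s * ((x + b * I) ^ ((s - 1 : ℝ) : ℂ)).re) ?_ ?_ <;>
    rw [interior_Ici] <;> intro x (hx : 0 < x)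
  · have hmem : x + b * I ∈ slitPlane := Or.inl (by simpa using hx)
    simpa using (hasDerivAt_re_ofReal_add_cpow (s := s) hmem).hasDerivWithinAt
  · have hre : 0 ≤ (x + b * I).re := by simpa using hx.le
    exact mul_nonneg hs₀ <|
      re_cpow_ofReal_nonneg hre (abs_le.mpr ⟨by linarith, by linarith⟩)

lemma neg_cos_pi_div_two_mul_three_halves :
    -Real.cos (Real.pi / 2 * (3 / 2)) = 1 / Real.sqrt 2 := by
  rw [show Real.pi / 2 * (3 / 2) = Real.pi - Real.pi / 4 by ring, Real.cos_pi_sub,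
    Real.cos_pi_div_four, neg_neg, Real.sqrt_div_self']

theorem neg_re_cpow_le_of_nonneg_general {s : ℝ} (hs₀ : 0 ≤ s) (hs₂ : s ≤ 2)
    {a : ℝ} (ha : 0 ≤ a) (b : ℝ) :
    -((a + b * I : ℂ) ^ (s : ℂ)).re ≤ |b| ^ s * -Real.cos (Real.pi / 2 * s) := by
  rw [mul_neg, neg_le_neg_iff, ← re_ofReal_mul_I_cpow_ofReal]
  simpa using monotoneOn_re_ofReal_add_mul_I_cpow hs₀ hs₂ b Set.self_mem_Ici ha ha

/-- For all real `a ≥ 0` and `b`, `-Re((a+ib)^{3/2}) ≤ |b|^{3/2}/√2`,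
where `(a+ib)^{3/2}` is the principal branch of the complex power. -/
theorem neg_re_cpow_le_of_nonneg (a b : ℝ) (ha : 0 ≤ a) :
    -((((a : ℂ) + (b : ℂ) * Complex.I) ^ ((3:ℂ)/2)).re) ≤ |b| ^ ((3:ℝ)/2) / Real.sqrt 2 := by
  have h := neg_re_cpow_le_of_nonneg_general (s := 3 / 2) (by norm_num) (by norm_num) ha b
  rw [neg_cos_pi_div_two_mul_three_halves, mul_one_div] at h
  simpa using h
end

section
/- For all real numbers a ≤ 0 and b, one has -Re((a+ib)^{3/2}) ≤ 2|b|^{3/2} + 2|b| · |a|^{1/2}, where (a+ib)^{3/2} denotes the principal branch of the complex power. -/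
/-! The principal square root `w` of `z` has nonnegative real part and satisfies
`z ^ (3 / 2) = w ^ 3`. Hence `-Re (w ^ 3) = 3 (Re w) (Im w) ^ 2 - (Re w) ^ 3` is at most
`3 (Re w) (Im w) ^ 2 = (3 / 2) |Im z| |Im w|`, and
`|Im w| ≤ ‖w‖ = ‖z‖ ^ (1 / 2) ≤ |Re z| ^ (1 / 2) + |Im z| ^ (1 / 2)`. -/

theorem neg_re_pow_three_le {w : ℂ} (hw : 0 ≤ w.re) :
    -(w ^ 3).re ≤ 3 / 2 * |(w ^ 2).im| * |w.im| := by
  have re_cube : (w ^ 3).re = w.re ^ 3 - 3 * w.re * w.im ^ 2 := by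
    simp only [pow_succ, pow_zero, one_mul, Complex.mul_re, Complex.mul_im]
    ring
  have im_sq : (w ^ 2).im = 2 * w.re * w.im := by
    simp only [pow_two, Complex.mul_im]
    ring
  calc
    -(w ^ 3).re = 3 * w.re * w.im ^ 2 - w.re ^ 3 := by rw [re_cube]; ring
    _ ≤ 3 * w.re * w.im ^ 2 := sub_le_self _ (pow_nonneg hw 3)
    _ = 3 * w.re * |w.im| ^ 2 := by rw [sq_abs]
    _ = 3 / 2 * |(w ^ 2).im| * |w.im| := by
      rw [im_sq, abs_mul, abs_of_nonneg (mul_nonneg zero_le_two hw)]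
      ring

theorem cpow_inv_two_re_nonneg (z : ℂ) : 0 ≤ (z ^ (2⁻¹ : ℂ)).re := by
  rw [Complex.cpow_inv_two_re]
  exact Real.sqrt_nonneg _

theorem norm_cpow_inv_two (z : ℂ) : ‖z ^ (2⁻¹ : ℂ)‖ = ‖z‖ ^ ((1 : ℝ) / 2) := by
  simpa using Complex.norm_cpow_real z (1 / 2)

theorem cpow_three_halves_eq_cpow_inv_two_pow (z : ℂ) :
    z ^ ((3 : ℂ) / 2) = (z ^ (2⁻¹ : ℂ)) ^ 3 := by
  rw [← Complex.cpow_ofNat_mul, div_eq_mul_inv]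

theorem neg_re_cpow_three_halves_le (z : ℂ) :
    -(z ^ ((3 : ℂ) / 2)).re ≤ 3 / 2 * |z.im| * ‖z‖ ^ ((1 : ℝ) / 2) :=
  calc
    -(z ^ ((3 : ℂ) / 2)).re = -((z ^ (2⁻¹ : ℂ)) ^ 3).re := by
      rw [cpow_three_halves_eq_cpow_inv_two_pow]
    _ ≤ 3 / 2 * |((z ^ (2⁻¹ : ℂ)) ^ 2).im| * |(z ^ (2⁻¹ : ℂ)).im| :=
      neg_re_pow_three_le (cpow_inv_two_re_nonneg z)
    _ = 3 / 2 * |z.im| * |(z ^ (2⁻¹ : ℂ)).im| := by rw [Complex.cpow_ofNat_inv_pow]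
    _ ≤ 3 / 2 * |z.im| * ‖z‖ ^ ((1 : ℝ) / 2) := by
      rw [← norm_cpow_inv_two]
      gcongr
      exact Complex.abs_im_le_norm _

theorem norm_rpow_le_abs_re_rpow_add_abs_im_rpow (z : ℂ) {p : ℝ} (hp₀ : 0 ≤ p) (hp₁ : p ≤ 1) :
    ‖z‖ ^ p ≤ |z.re| ^ p + |z.im| ^ p :=
  (Real.rpow_le_rpow (norm_nonneg z) z.norm_le_abs_re_add_abs_im hp₀).trans
    (Real.rpow_add_le_add_rpow (abs_nonneg _) (abs_nonneg _) hp₀ hp₁)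

theorem neg_re_cpow_le_of_nonpos_general (a b : ℝ) :
    -((((a : ℂ) + (b : ℂ) * Complex.I) ^ ((3 : ℂ) / 2)).re) ≤
      3 / 2 * |b| ^ ((3 : ℝ) / 2) + 3 / 2 * |b| * |a| ^ ((1 : ℝ) / 2) := by
  have norm_rpow_le :
      ‖(a : ℂ) + b * Complex.I‖ ^ ((1 : ℝ) / 2) ≤ |a| ^ ((1 : ℝ) / 2) + |b| ^ ((1 : ℝ) / 2) := by
    simpa using norm_rpow_le_abs_re_rpow_add_abs_im_rpow (a + b * Complex.I)
      one_half_pos.le one_half_lt_one.le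
  have abs_rpow : |b| ^ ((3 : ℝ) / 2) = |b| * |b| ^ ((1 : ℝ) / 2) := by
    rw [← Real.rpow_one_add' (abs_nonneg b) (by norm_num)]
    norm_num
  calc
    -(((a : ℂ) + b * Complex.I) ^ ((3 : ℂ) / 2)).re
        ≤ 3 / 2 * |b| * ‖(a : ℂ) + b * Complex.I‖ ^ ((1 : ℝ) / 2) := by
      simpa using neg_re_cpow_three_halves_le (a + b * Complex.I)
    _ ≤ 3 / 2 * |b| * (|a| ^ ((1 : ℝ) / 2) + |b| ^ ((1 : ℝ) / 2)) := by gcongr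
    _ = 3 / 2 * |b| ^ ((3 : ℝ) / 2) + 3 / 2 * |b| * |a| ^ ((1 : ℝ) / 2) := by
      rw [abs_rpow]
      ring

/-- For all real `a ≤ 0` and `b`, `-Re((a+ib)^{3/2}) ≤ 2|b|^{3/2} + 2|b|·|a|^{1/2}`,
where `(a+ib)^{3/2}` is the principal branch of the complex power. -/
theorem neg_re_cpow_le_of_nonpos (a b : ℝ) (ha : a ≤ 0) :
    -((((a : ℂ) + (b : ℂ) * Complex.I) ^ ((3:ℂ)/2)).re) ≤
      2 * |b| ^ ((3:ℝ)/2) + 2 * |b| * |a| ^ ((1:ℝ)/2) :=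
  (neg_re_cpow_le_of_nonpos_general a b).trans (by gcongr <;> norm_num)
end

section
/- For every nonzero complex number k with arg k ∈ [-π/6, 0] and every real f > 0, one has |exp(-4 i k³/(3 f))| ≤ exp(-8 |k|² |Im k| / (3 f)). -/
/-! Since `Re (-4 i k³ / (3 f)) = 4 Im (k³) / (3 f)`, the claim is `Im (k³) ≤ -2 |k|² |Im k|`.
By the triple-angle formula `Im (k³) = Im k (3 |k|² - 4 (Im k)²)`. Here `Im k ≤ 0`, and the second
factor is at least `2 |k|²` exactly when `|Im k| ≤ |k| / 2`, which holds for `|arg k| ≤ π/6` because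
`sin (π/6) = 1/2`. -/

theorem im_nonpos_of_arg_nonpos {z : ℂ} (h : z.arg ≤ 0) : z.im ≤ 0 := by
  rw [← Complex.norm_mul_sin_arg z]
  exact mul_nonpos_of_nonneg_of_nonpos (norm_nonneg z)
    (Real.sin_nonpos_of_nonpos_of_neg_pi_le h (Complex.neg_pi_lt_arg z).le)

theorem abs_im_le_norm_mul_sin {z : ℂ} {θ : ℝ} (hz : |z.arg| ≤ θ) (hθ : θ ≤ Real.pi / 2) :
    |z.im| ≤ ‖z‖ * Real.sin θ := by
  have hsin : Real.sin |z.arg| ≤ Real.sin θ :=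
    Real.sin_le_sin_of_le_of_le_pi_div_two (by linarith [abs_nonneg z.arg, Real.pi_pos]) hθ hz
  calc |z.im| = ‖z‖ * |Real.sin z.arg| := by
        rw [← Complex.norm_mul_sin_arg z, abs_mul, abs_norm]
    _ = ‖z‖ * Real.sin |z.arg| := by
        rw [Real.abs_sin_eq_sin_abs_of_abs_le_pi (Complex.abs_arg_le_pi z)]
    _ ≤ ‖z‖ * Real.sin θ := by gcongr

theorem two_mul_abs_im_le_norm {z : ℂ} (hz : |z.arg| ≤ Real.pi / 6) : 2 * |z.im| ≤ ‖z‖ := by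
  have him := abs_im_le_norm_mul_sin hz (by linarith [Real.pi_pos])
  rw [Real.sin_pi_div_six] at him
  linarith

theorem im_pow_three (z : ℂ) : (z ^ 3).im = z.im * (3 * ‖z‖ ^ 2 - 4 * z.im ^ 2) := by
  rw [Complex.sq_norm, Complex.normSq_apply]
  simp only [pow_succ, pow_zero, one_mul, Complex.mul_im, Complex.mul_re]
  ring

theorem im_pow_three_le {z : ℂ} (him : z.im ≤ 0) (hz : 2 * |z.im| ≤ ‖z‖) :
    (z ^ 3).im ≤ -2 * ‖z‖ ^ 2 * |z.im| := by
  have hsq : 4 * z.im ^ 2 ≤ ‖z‖ ^ 2 := by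
    calc 4 * z.im ^ 2 = (2 * |z.im|) ^ 2 := by rw [mul_pow, sq_abs]; norm_num
      _ ≤ ‖z‖ ^ 2 := by gcongr
  calc (z ^ 3).im = z.im * (3 * ‖z‖ ^ 2 - 4 * z.im ^ 2) := im_pow_three z
    _ ≤ z.im * (2 * ‖z‖ ^ 2) := mul_le_mul_of_nonpos_left (by linarith) him
    _ = -2 * ‖z‖ ^ 2 * |z.im| := by rw [abs_of_nonpos him]; ring

theorem norm_exp_neg_mul_I_mul_div (a b : ℝ) (z : ℂ) :
    ‖Complex.exp (-a * Complex.I * z / b)‖ = Real.exp (a * z.im / b) := by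
  rw [Complex.norm_exp, Complex.div_ofReal_re]
  simp

theorem abs_exp_neg_le_general (k : ℂ) (him : k.im ≤ 0) (hk : 2 * |k.im| ≤ ‖k‖)
    (f : ℝ) (hf : 0 < f) :
    ‖Complex.exp (-4 * Complex.I * k ^ 3 / (3 * (f : ℂ)))‖ ≤
      Real.exp (-8 * ‖k‖ ^ 2 * |k.im| / (3 * f)) := by
  calc ‖Complex.exp (-4 * Complex.I * k ^ 3 / (3 * (f : ℂ)))‖
      = Real.exp (4 * (k ^ 3).im / (3 * f)) := by
        simpa only [Complex.ofReal_mul, Complex.ofReal_ofNat] using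
          norm_exp_neg_mul_I_mul_div 4 (3 * f) (k ^ 3)
    _ ≤ Real.exp (-8 * ‖k‖ ^ 2 * |k.im| / (3 * f)) := by
        gcongr Real.exp (?_ / _)
        linarith [im_pow_three_le him hk]

/-- For every nonzero complex `k` with `arg k ∈ [-π/6, 0]` and every real `f > 0`,
`|exp(-4 i k³/(3 f))| ≤ exp(-8 |k|² |Im k| / (3 f))`. -/
theorem abs_exp_neg_le (k : ℂ) (hk : k ≠ 0)
    (harg : k.arg ∈ Set.Icc (-(Real.pi/6)) 0) (f : ℝ) (hf : 0 < f) :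
    ‖Complex.exp (-4 * Complex.I * k^3 / (3 * (f : ℂ)))‖ ≤
      Real.exp (-8 * ‖k‖^2 * |k.im| / (3 * f)) :=
  abs_exp_neg_le_general k (im_nonpos_of_arg_nonpos harg.2)
    (two_mul_abs_im_le_norm (abs_le.mpr ⟨harg.1, harg.2.trans (by positivity)⟩)) f hf
end

section
/- For every nonzero complex number k with arg k ∈ [-π/2, -5π/12] and every real f > 0, one has |exp(4 i k³/(3 f))| ≤ exp(-2√2 |k|³ / (3 f)). -/
/-!
Writing `θ = arg k`, the modulus of `exp (4 i k³ / (3 f))` is `exp (-4 |k|³ sin (3θ) / (3 f))`, so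
the bound amounts to `sin (3θ) ≥ √2 / 2`. Modulo `2π`, tripling maps the sector of half-angle
`π / 12` about `-π / 2` onto `[π / 4, 3π / 4]`, where this inequality holds.
-/

theorem im_pow_eq_norm_pow_mul_sin (z : ℂ) (n : ℕ) :
    (z ^ n).im = ‖z‖ ^ n * Real.sin (n * z.arg) := by
  rw [← Complex.norm_mul_sin_arg, norm_pow, ← Real.Angle.sin_coe, Complex.arg_pow_coe_angle,
    ← Real.Angle.natCast_mul_eq_nsmul, Real.Angle.sin_coe]

theorem norm_exp_ofReal_mul_I_mul_pow (c : ℝ) (z : ℂ) (n : ℕ) :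
    ‖Complex.exp (c * (Complex.I * z ^ n))‖ =
      Real.exp (-(c * (‖z‖ ^ n * Real.sin (n * z.arg)))) := by
  rw [Complex.norm_exp, Complex.re_ofReal_mul, Complex.I_mul_re, im_pow_eq_norm_pow_mul_sin,
    mul_neg]

theorem sin_le_sin_of_le_of_le_pi_sub {a x : ℝ} (ha : -(Real.pi / 2) ≤ a) (hax : a ≤ x)
    (hxa : x ≤ Real.pi - a) : Real.sin a ≤ Real.sin x := by
  rw [← Real.cos_pi_div_two_sub, ← Real.cos_pi_div_two_sub x, ← Real.cos_abs (Real.pi / 2 - x)]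
  have hdist : |Real.pi / 2 - x| ≤ Real.pi / 2 - a := abs_le.mpr ⟨by linarith, by linarith⟩
  exact Real.cos_le_cos_of_nonneg_of_le_pi (abs_nonneg _) (by linarith) hdist

theorem sqrt_two_div_two_le_sin_three_mul {θ : ℝ}
    (hθ : θ ∈ Set.Icc (-(7 * Real.pi / 12)) (-(5 * Real.pi / 12))) :
    √2 / 2 ≤ Real.sin (3 * θ) := by
  obtain ⟨hlower, hupper⟩ := hθ
  rw [← Real.sin_pi_div_four, ← Real.sin_add_two_pi (3 * θ)]
  apply sin_le_sin_of_le_of_le_pi_sub <;> linarith [Real.pi_pos]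

theorem abs_exp_le_sector_general (k : ℂ)
    (harg : k.arg ∈ Set.Icc (-(7 * Real.pi / 12)) (-(5 * Real.pi / 12))) (f : ℝ) (hf : 0 < f) :
    ‖Complex.exp (4 * Complex.I * k ^ 3 / (3 * (f : ℂ)))‖ ≤
      Real.exp (-2 * √2 * ‖k‖ ^ 3 / (3 * f)) := by
  have exponent : 4 * Complex.I * k ^ 3 / (3 * (f : ℂ)) =
      ((4 / (3 * f) : ℝ) : ℂ) * (Complex.I * k ^ 3) := by
    push_cast
    ring
  rw [exponent, norm_exp_ofReal_mul_I_mul_pow, Real.exp_le_exp]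
  calc -(4 / (3 * f) * (‖k‖ ^ 3 * Real.sin ((3 : ℕ) * k.arg)))
      ≤ -(4 / (3 * f) * (‖k‖ ^ 3 * (√2 / 2))) := by
        gcongr
        exact sqrt_two_div_two_le_sin_three_mul harg
    _ = -2 * √2 * ‖k‖ ^ 3 / (3 * f) := by ring

/-- For every nonzero complex `k` with `arg k ∈ [-π/2, -5π/12]` and every real `f > 0`,
`|exp(4 i k³/(3 f))| ≤ exp(-2√2 |k|³ / (3 f))`. -/
theorem abs_exp_le_sector (k : ℂ) (hk : k ≠ 0)
    (harg : k.arg ∈ Set.Icc (-(Real.pi/2)) (-(5 * Real.pi/12))) (f : ℝ) (hf : 0 < f) :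
    ‖Complex.exp (4 * Complex.I * k^3 / (3 * (f : ℂ)))‖ ≤
      Real.exp (-2 * Real.sqrt 2 * ‖k‖^3 / (3 * f)) :=
  abs_exp_le_sector_general k ⟨by linarith [harg.1, Real.pi_pos], harg.2⟩ f hf
end

section
/- Let k₀ > 0, 0 < ε < k₀/2, and let L be a holomorphic function on an open set containing the closed disk D = {k ∈ ℂ : |k - k₀| ≤ ε}. Let f₀ > 0, C₁ > 0 and let c : D × (0, f₀) → ℂ satisfy |c(k,f)| ≤ C₁ f and |c(k,f) - c(k',f)| ≤ C₁ |k - k'| for all k, k' ∈ D and f ∈ (0, f₀). Then there exist ε' ∈ (0, ε], f₁ ∈ (0, f₀] and C₂ > 0 such that for every f ∈ (0, f₁) and every real η₀ with |η₀ - k₀| < ε'/2, the equation k³ = η₀³ + (3 i f/4) L(k) + f c(k,f) has exactly one solution k with |k - k₀| < ε', and this solution satisfies |k - η₀ - i (f/(4 η₀²)) L(η₀)| ≤ C₂ f². -/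
/-!
The cubing map has invertible strict derivative `3k₀²` at `k₀ ≠ 0`, so near `k₀` it is a Lipschitz
small perturbation of a linear isomorphism, and it stays one after `f g` is subtracted from it,
where `g k = (3i/4) L k + c(k, f)` and `f` is small. The contraction principle, in the form of the
quantitative inverse function theorem, then solves `k³ - f g k = η₀³` uniquely and gives
`k - η₀ = O(f)`. Feeding this back into the Taylor identity
`k³ - η₀³ = 3η₀² (k - η₀) + (k - η₀)² (k + 2η₀)` yields `k` up to `O(f²)`.
-/

open Filter Metric Set Topology
open scoped NNReal

section Perturbation

variable {𝕜 E F : Type*} [NontriviallyNormedField 𝕜] [NormedAddCommGroup E] [NormedSpace 𝕜 E]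
  [NormedAddCommGroup F] [NormedSpace 𝕜 F] {P g : E → F} {s : Set E} {b : E} {c M : ℝ≥0}

theorem approximatesLinearOn_sub_smul {P' : E →L[𝕜] F} (hP : ApproximatesLinearOn P P' s c)
    (hg : LipschitzOnWith M g s) (t : 𝕜) :
    ApproximatesLinearOn (P - t • g) P' s (c + ‖t‖₊ * M) := by
  have htg : LipschitzOnWith (‖t‖₊ * M) (t • g) s := (lipschitzWith_smul t).comp_lipschitzOnWith hg
  have h := hP.lipschitzOnWith.sub htg
  rw [ApproximatesLinearOn.approximatesLinearOn_iff_lipschitzOnWith]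
  rwa [sub_right_comm]

variable {P' : E ≃L[𝕜] F}

theorem existsUnique_mem_eq_of_approximatesLinearOn [CompleteSpace E]
    (hP : ApproximatesLinearOn P (P' : E →L[𝕜] F) s c)
    (hc : Subsingleton E ∨ c < ‖(P'.symm : F →L[𝕜] E)‖₊⁻¹) {δ : ℝ} (hδ : 0 ≤ δ)
    (hbs : closedBall b δ ⊆ s) {y : F}
    (hy : ‖y - P b‖ ≤ ((‖(P'.symm : F →L[𝕜] E)‖₊ : ℝ)⁻¹ - c) * δ) :
    ∃! x, x ∈ s ∧ P x = y := by
  obtain ⟨x, hx, rfl⟩ := hP.surjOn_closedBall_of_nonlinearRightInverse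
    P'.toNonlinearRightInverse hδ hbs (mem_closedBall_iff_norm.2 hy)
  exact ⟨x, ⟨hbs hx, rfl⟩, fun z hz => hP.injOn hc hz.1 (hbs hx) hz.2⟩

theorem norm_sub_le_of_approximatesLinearOn (hP : ApproximatesLinearOn P (P' : E →L[𝕜] F) s c)
    (hc : Subsingleton E ∨ c < ‖(P'.symm : F →L[𝕜] E)‖₊⁻¹) {x y : E} (hx : x ∈ s) (hy : y ∈ s) :
    ‖x - y‖ ≤ (‖(P'.symm : F →L[𝕜] E)‖₊⁻¹ - c)⁻¹ * ‖P x - P y‖ := by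
  simpa only [Subtype.dist_eq, dist_eq_norm] using!
    (hP.antilipschitz hc).le_mul_dist ⟨x, hx⟩ ⟨y, hy⟩

theorem existsUnique_eq_add_smul_of_hasStrictFDerivAt [CompleteSpace E] [Nontrivial E]
    (hP : HasStrictFDerivAt P (P' : E →L[𝕜] F) b) :
    ∃ C : ℝ≥0, ∀ᶠ e in 𝓝[>] (0 : ℝ), ∀ M : ℝ≥0, ∀ᶠ t in 𝓝 (0 : 𝕜), ∀ g : E → F,
      LipschitzOnWith M g (ball b e) → (∀ x ∈ ball b e, ‖g x‖ ≤ M) → ∀ η ∈ ball b (e / 2),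
        (∃! x, x ∈ ball b e ∧ P x = P η + t • g x) ∧
          ∀ x ∈ ball b e, P x = P η + t • g x → ‖x - η‖ ≤ C * M * ‖t‖ := by
  set ν := ‖(P'.symm : F →L[𝕜] E)‖₊⁻¹
  have hν : 0 < ν := inv_pos.2 (P'.subsingleton_or_nnnorm_symm_pos.resolve_left
    (not_subsingleton E))
  obtain ⟨s, hs, hPs⟩ := hP.approximates_deriv_on_nhds (c := ν / 4) (.inr (by positivity))
  refine ⟨(ν - ν / 2)⁻¹, ?_⟩
  filter_upwards [self_mem_nhdsWithin, (eventually_ball_subset hs).filter_mono nhdsWithin_le_nhds]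
    with e he hes M
  have he : 0 < e := he
  have tendsto_zero : Tendsto (fun t : 𝕜 => ‖t‖ * M) (𝓝 0) (𝓝 0) := by
    simpa using (tendsto_norm_zero (E := 𝕜)).mul_const (M : ℝ)
  filter_upwards [tendsto_zero.eventually_le_const (show (0 : ℝ) < ν / 4 by positivity),
    tendsto_zero.eventually_le_const (show 0 < (ν : ℝ) / 4 * e by positivity)]
    with t htM htMe g hgM hgB η hη
  have approx : ApproximatesLinearOn (P - t • g) (P' : E →L[𝕜] F) (ball b e) (ν / 2) := by
    refine (approximatesLinearOn_sub_smul (hPs.mono_set hes) hgM t).mono_num ?_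
    rw [← NNReal.coe_le_coe]
    push_cast
    linarith
  have hν2 : Subsingleton E ∨ ν / 2 < ν := .inr (NNReal.half_lt_self hν.ne')
  have eq_iff : ∀ x, P x = P η + t • g x ↔ (P - t • g) x = P η := fun x =>
    sub_eq_iff_eq_add.symm
  have hηe : η ∈ ball b e := ball_subset_ball (by linarith) hη
  have residual : ‖P η - (P - t • g) η‖ ≤ ‖t‖ * M := by
    simpa [norm_smul] using mul_le_mul_of_nonneg_left (hgB η hηe) (norm_nonneg t)
  simp only [eq_iff]
  refine ⟨existsUnique_mem_eq_of_approximatesLinearOn approx hν2 (half_pos he).le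
    (closedBall_subset_ball' (by linarith [mem_ball.1 hη])) (residual.trans (htMe.trans ?_)), ?_⟩
  · change (ν : ℝ) / 4 * e ≤ (ν - (ν / 2 : ℝ≥0)) * (e / 2)
    push_cast
    linarith
  · intro x hx hxη
    calc ‖x - η‖ ≤ (ν - ν / 2)⁻¹ * ‖(P - t • g) x - (P - t • g) η‖ :=
          norm_sub_le_of_approximatesLinearOn approx hν2 hx hηe
      _ ≤ (ν - ν / 2)⁻¹ * (‖t‖ * M) := by rw [hxη]; gcongr
      _ = (ν - ν / 2)⁻¹ * M * ‖t‖ := by ring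

end Perturbation

theorem existsUnique_cube_eq_add_mul {k₀ : ℂ} {ε : ℝ} (hk₀ : k₀ ≠ 0) (hε : 0 < ε) :
    ∃ C : ℝ≥0, ∃ e ∈ Ioc 0 ε, ∀ M : ℝ≥0, ∀ᶠ f : ℝ in 𝓝[>] 0, ∀ g : ℂ → ℂ,
      LipschitzOnWith M g (ball k₀ e) → (∀ k ∈ ball k₀ e, ‖g k‖ ≤ M) →
        ∀ η, ‖η - k₀‖ < e / 2 →
          (∃! k, ‖k - k₀‖ < e ∧ k ^ 3 = η ^ 3 + f * g k) ∧
            ∀ k, ‖k - k₀‖ < e → k ^ 3 = η ^ 3 + f * g k → ‖k - η‖ ≤ (C * M : ℝ≥0) * f := by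
  obtain ⟨C, hC⟩ := existsUnique_eq_add_smul_of_hasStrictFDerivAt
    ((hasStrictDerivAt_pow 3 k₀).hasStrictFDerivAt_equiv (by simpa))
  obtain ⟨e, solve, he⟩ := (hC.and (Ioc_mem_nhdsGT hε)).exists
  refine ⟨C, e, he, fun M => ?_⟩
  have ofReal_tendsto : Tendsto Complex.ofReal (𝓝[>] 0) (𝓝 0) :=
    (Complex.continuous_ofReal.tendsto' 0 0 rfl).mono_left nhdsWithin_le_nhds
  filter_upwards [ofReal_tendsto.eventually (solve M), self_mem_nhdsWithin] with f hf hf0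
  simpa only [mem_ball_iff_norm, smul_eq_mul, Complex.norm_of_nonneg (le_of_lt hf0),
    NNReal.coe_mul] using hf

theorem norm_sub_sub_div_le_of_cube_eq {𝕂 : Type*} [NormedField 𝕂] {k η s s₀ : 𝕂}
    (hη : 3 * η ^ 2 ≠ 0) (hk : k ^ 3 = η ^ 3 + s) :
    ‖k - η - s₀ / (3 * η ^ 2)‖ ≤
      (‖s - s₀‖ + ‖k - η‖ ^ 2 * ‖k + 2 * η‖) / ‖3 * η ^ 2‖ := by
  have taylor : k - η - s₀ / (3 * η ^ 2) =
      ((s - s₀) - (k - η) ^ 2 * (k + 2 * η)) / (3 * η ^ 2) := by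
    rw [eq_div_iff hη, sub_mul, div_mul_cancel₀ _ hη]
    linear_combination hk
  rw [taylor, norm_div, ← norm_pow, ← norm_mul]
  gcongr
  exact norm_sub_le _ _

theorem exists_lipschitzOnWith_closedBall_of_differentiableOn {E : Type*} [NormedAddCommGroup E]
    [NormedSpace ℂ E] [CompleteSpace E] {L : ℂ → E} {U : Set ℂ} (hU : IsOpen U)
    (hL : DifferentiableOn ℂ L U) {a : ℂ} {ε : ℝ} (ha : closedBall a ε ⊆ U) :
    ∃ K, LipschitzOnWith K L (closedBall a ε) := by
  refine LocallyLipschitzOn.exists_lipschitzOnWith_of_compact (isCompact_closedBall a ε) ?_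
  intro x hx
  obtain ⟨K, t, ht, hK⟩ :=
    ((hL.analyticAt (hU.mem_nhds (ha hx))).contDiffAt (n := 1)).exists_lipschitzOnWith
  exact ⟨K, t, mem_nhdsWithin_of_mem_nhds ht, hK⟩

theorem exists_lipschitzOnWith_and_norm_le_of_isCompact {X E : Type*} [PseudoMetricSpace X]
    [SeminormedAddCommGroup E] {L : X → E} {s : Set X} {K : ℝ≥0} (hs : IsCompact s)
    (hL : LipschitzOnWith K L s) : ∃ M, LipschitzOnWith M L s ∧ ∀ x ∈ s, ‖L x‖ ≤ M := by
  obtain ⟨B, hB⟩ := hs.exists_bound_of_continuousOn hL.continuousOn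
  refine ⟨max K B.toNNReal, hL.weaken (le_max_left _ _), fun x hx => ?_⟩
  exact (hB x hx).trans ((Real.le_coe_toNNReal B).trans (NNReal.coe_le_coe.2 (le_max_right _ _)))

theorem norm_mul_add_le_of_norm_le_one {𝕂 : Type*} [NonUnitalSeminormedRing 𝕂] {a l w : 𝕂}
    {B C : ℝ} (ha : ‖a‖ ≤ 1) (hl : ‖l‖ ≤ B) (hw : ‖w‖ ≤ C) : ‖a * l + w‖ ≤ B + C :=
  calc ‖a * l + w‖ ≤ ‖a‖ * ‖l‖ + ‖w‖ := norm_add_le_of_le (norm_mul_le a l) le_rfl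
    _ ≤ B + C := add_le_add ((mul_le_of_le_one_left (norm_nonneg l) ha).trans hl) hw

theorem norm_sub_sub_le_of_resonance_eq {L : ℂ → ℂ} {k₀ k η w : ℂ} {f : ℝ} {C₁ D M : ℝ≥0}
    (hf : 0 < f) (hk₀ : k₀ ≠ 0) (hk : ‖k - k₀‖ ≤ ‖k₀‖) (hη : ‖η - k₀‖ ≤ ‖k₀‖ / 2)
    (hL : ‖L k - L η‖ ≤ M * ‖k - η‖) (hw : ‖w‖ ≤ C₁ * f) (hkη : ‖k - η‖ ≤ D * f)
    (heq : k ^ 3 = η ^ 3 + (3 * Complex.I * f / 4) * L k + f * w) :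
    ‖k - η - Complex.I * (f / (4 * η ^ 2)) * L η‖ ≤
      (M * D + C₁ + D ^ 2 * (5 * ‖k₀‖)) / (3 * (‖k₀‖ / 2) ^ 2) * f ^ 2 := by
  have hk₀' : 0 < ‖k₀‖ := norm_pos_iff.2 hk₀
  have η_lower : ‖k₀‖ / 2 ≤ ‖η‖ := by
    linarith [norm_sub_norm_le k₀ η, norm_sub_rev k₀ η]
  have hη0 : η ≠ 0 := norm_pos_iff.1 (by linarith)
  have sum_le : ‖k + 2 * η‖ ≤ 5 * ‖k₀‖ := by
    calc ‖k + 2 * η‖ = ‖(k - k₀) + 2 * (η - k₀) + 3 * k₀‖ := by ring_nf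
      _ ≤ ‖k - k₀‖ + 2 * ‖η - k₀‖ + 3 * ‖k₀‖ := by
        simpa only [norm_mul, Complex.norm_ofNat] using
          norm_add₃_le (a := k - k₀) (b := 2 * (η - k₀)) (c := 3 * k₀)
      _ ≤ 5 * ‖k₀‖ := by linarith
  have source_le : ‖(3 * Complex.I * f / 4) * L k + f * w - (3 * Complex.I * f / 4) * L η‖ ≤
      (M * D + C₁) * f ^ 2 := by
    calc _ = ‖f * ((3 * Complex.I / 4) * (L k - L η) + w)‖ := by ring_nf
      _ ≤ f * (M * (D * f) + C₁ * f) := by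
        rw [norm_mul, Complex.norm_of_nonneg hf.le]
        gcongr
        exact norm_mul_add_le_of_norm_le_one (by norm_num) (hL.trans (by gcongr)) hw
      _ = (M * D + C₁) * f ^ 2 := by ring
  calc ‖k - η - Complex.I * (f / (4 * η ^ 2)) * L η‖
      = ‖k - η - (3 * Complex.I * f / 4) * L η / (3 * η ^ 2)‖ := by
        congr 2
        field_simp
    _ ≤ _ := norm_sub_sub_div_le_of_cube_eq (by simpa) (heq.trans (add_assoc _ _ _))
    _ ≤ ((M * D + C₁) * f ^ 2 + (D * f) ^ 2 * (5 * ‖k₀‖)) / (3 * (‖k₀‖ / 2) ^ 2) := by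
        rw [norm_mul 3, Complex.norm_ofNat, norm_pow]
        gcongr
    _ = _ := by ring

theorem lipschitzOnWith_const_mul_add {𝕂 : Type*} [NormedRing 𝕂] {L w : 𝕂 → 𝕂} {s : Set 𝕂}
    {K C : ℝ≥0} {a : 𝕂} (ha : ‖a‖ ≤ 1) (hL : LipschitzOnWith K L s)
    (hw : LipschitzOnWith C w s) : LipschitzOnWith (K + C) (fun k => a * L k + w k) s := by
  have haL : LipschitzOnWith (‖a‖₊ * K) (fun k => a * L k) s :=
    (lipschitzWith_smul a).comp_lipschitzOnWith hL
  exact (haL.weaken (mul_le_of_le_one_left' ha)).add hw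

theorem resonance_string_contraction_general (k₀ : ℂ) (ε : ℝ) (hk₀ : k₀ ≠ 0) (hε : 0 < ε)
    (L : ℂ → ℂ) (K : ℝ≥0) (hL : LipschitzOnWith K L (closedBall k₀ ε))
    (f₀ : ℝ) (C₁ : ℝ≥0) (hf₀ : 0 < f₀) (c : ℂ → ℝ → ℂ)
    (hc1 : ∀ k ∈ closedBall k₀ ε, ∀ f ∈ Ioo 0 f₀, ‖c k f‖ ≤ C₁ * f)
    (hc2 : ∀ f ∈ Ioo 0 f₀, LipschitzOnWith C₁ (c · f) (closedBall k₀ ε)) :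
    ∃ ε' ∈ Ioc 0 ε, ∃ f₁ ∈ Ioc 0 f₀, ∃ C₂ > (0 : ℝ),
      ∀ f ∈ Ioo 0 f₁, ∀ η₀ : ℂ, ‖η₀ - k₀‖ < ε' / 2 →
        (∃! k : ℂ, ‖k - k₀‖ < ε' ∧
          k ^ 3 = η₀ ^ 3 + (3 * Complex.I * f / 4) * L k + f * c k f) ∧
        (∀ k : ℂ, ‖k - k₀‖ < ε' →
          k ^ 3 = η₀ ^ 3 + (3 * Complex.I * f / 4) * L k + f * c k f →
          ‖k - η₀ - Complex.I * (f / (4 * η₀ ^ 2)) * L η₀‖ ≤ C₂ * f ^ 2) := by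
  obtain ⟨M, hLM, hLB⟩ :=
    exists_lipschitzOnWith_and_norm_le_of_isCompact (isCompact_closedBall k₀ ε) hL
  obtain ⟨C, e, ⟨he0, he⟩, solve⟩ :=
    existsUnique_cube_eq_add_mul hk₀ (lt_min hε (norm_pos_iff.2 hk₀))
  obtain ⟨heε, hek⟩ := le_min_iff.1 he
  have ball_sub : ball k₀ e ⊆ closedBall k₀ ε :=
    ball_subset_closedBall.trans (closedBall_subset_closedBall heε)
  obtain ⟨f₁, ⟨hf₁0, hf₁⟩, solve⟩ :=
    (mem_nhdsGT_iff_exists_mem_Ioc_Ioo_subset (lt_min hf₀ one_pos)).1 (solve (M + C₁))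
  obtain ⟨hf₁f₀, hf₁1⟩ := le_min_iff.1 hf₁
  let D := C * (M + C₁)
  refine ⟨e, ⟨he0, heε⟩, f₁, ⟨hf₁0, hf₁f₀⟩,
    (M * D + C₁ + D ^ 2 * (5 * ‖k₀‖)) / (3 * (‖k₀‖ / 2) ^ 2) + 1, by positivity,
    fun f hf η hη => ?_⟩
  have hff₀ : f ∈ Ioo 0 f₀ := ⟨hf.1, hf.2.trans_le hf₁f₀⟩
  have source_lip : LipschitzOnWith (M + C₁) (fun k => (3 * Complex.I / 4) * L k + c k f)
      (ball k₀ e) :=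
    (lipschitzOnWith_const_mul_add (by norm_num) hLM (hc2 f hff₀)).mono ball_sub
  have source_bound : ∀ k ∈ ball k₀ e, ‖(3 * Complex.I / 4) * L k + c k f‖ ≤ (M + C₁ : ℝ≥0) := by
    intro k hk
    have hc : ‖c k f‖ ≤ C₁ := (hc1 k (ball_sub hk) f hff₀).trans
      (mul_le_of_le_one_right C₁.2 (hf.2.le.trans hf₁1))
    exact norm_mul_add_le_of_norm_le_one (by norm_num) (hLB k (ball_sub hk)) hc
  have source_eq : ∀ k, η ^ 3 + f * ((3 * Complex.I / 4) * L k + c k f) =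
      η ^ 3 + (3 * Complex.I * f / 4) * L k + f * c k f := fun k => by ring
  obtain ⟨unique, close⟩ := solve hf _ source_lip source_bound η hη
  simp only [source_eq] at unique close
  refine ⟨unique, fun k hk hkeq => ?_⟩
  have hk' := ball_sub (mem_ball_iff_norm.2 hk)
  have hη' : η ∈ closedBall k₀ ε := mem_closedBall_iff_norm.2 (by linarith)
  calc _ ≤ (M * D + C₁ + D ^ 2 * (5 * ‖k₀‖)) / (3 * (‖k₀‖ / 2) ^ 2) * f ^ 2 :=
        norm_sub_sub_le_of_resonance_eq hf.1 hk₀ (hk.le.trans hek) (by linarith)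
          (hLM.norm_sub_le hk' hη') (hc1 k hk' f hff₀) (close k hk hkeq) hkeq
    _ ≤ _ := by gcongr; exact le_add_of_nonneg_right zero_le_one

/-- Contraction lemma producing strings of resonances near the positive real axis.
Let `k₀ > 0`, `0 < ε < k₀/2`, let `L` be holomorphic on an open set containing the
closed disk `D = {k : |k - k₀| ≤ ε}`, and let `c(k,f)` satisfy `|c(k,f)| ≤ C₁ f` and a
Lipschitz bound `|c(k,f) - c(k',f)| ≤ C₁|k-k'|` on `D × (0,f₀)`.  Then there are
`ε' ∈ (0,ε]`, `f₁ ∈ (0,f₀]`, `C₂ > 0` such that for every `f ∈ (0,f₁)` and every real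
`η₀` with `|η₀ - k₀| < ε'/2`, the equation
`k³ = η₀³ + (3if/4)L(k) + f c(k,f)` has exactly one solution `k` with `|k - k₀| < ε'`,
and this solution satisfies `|k - η₀ - i(f/(4η₀²))L(η₀)| ≤ C₂ f²`. -/
theorem resonance_string_contraction (k₀ ε : ℝ) (hk₀ : 0 < k₀) (hε : 0 < ε)
    (hεk : ε < k₀ / 2)
    (L : ℂ → ℂ) (U : Set ℂ) (hU : IsOpen U)
    (hDU : Metric.closedBall ((k₀ : ℂ)) ε ⊆ U) (hL : DifferentiableOn ℂ L U)
    (f₀ C₁ : ℝ) (hf₀ : 0 < f₀) (hC₁ : 0 < C₁)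
    (c : ℂ → ℝ → ℂ)
    (hc1 : ∀ k ∈ Metric.closedBall ((k₀ : ℂ)) ε, ∀ f ∈ Set.Ioo (0 : ℝ) f₀,
      ‖c k f‖ ≤ C₁ * f)
    (hc2 : ∀ k ∈ Metric.closedBall ((k₀ : ℂ)) ε, ∀ k' ∈ Metric.closedBall ((k₀ : ℂ)) ε,
      ∀ f ∈ Set.Ioo (0 : ℝ) f₀, ‖c k f - c k' f‖ ≤ C₁ * ‖k - k'‖) :
    ∃ ε' ∈ Set.Ioc (0 : ℝ) ε, ∃ f₁ ∈ Set.Ioc (0 : ℝ) f₀, ∃ C₂ > (0 : ℝ),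
      ∀ f ∈ Set.Ioo (0 : ℝ) f₁, ∀ η₀ : ℝ, |η₀ - k₀| < ε' / 2 →
        (∃! k : ℂ, ‖k - (k₀ : ℂ)‖ < ε' ∧
          k ^ 3 = (η₀ : ℂ) ^ 3 + (3 * Complex.I * f / 4) * L k + (f : ℂ) * c k f) ∧
        (∀ k : ℂ, ‖k - (k₀ : ℂ)‖ < ε' →
          k ^ 3 = (η₀ : ℂ) ^ 3 + (3 * Complex.I * f / 4) * L k + (f : ℂ) * c k f →
          ‖k - (η₀ : ℂ) - Complex.I * ((f : ℂ) / (4 * (η₀ : ℂ) ^ 2)) * L (η₀ : ℂ)‖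
            ≤ C₂ * f ^ 2) := by
  lift C₁ to ℝ≥0 using hC₁.le
  have hk₀' : (k₀ : ℂ) ≠ 0 := Complex.ofReal_ne_zero.2 hk₀.ne'
  obtain ⟨K, hK⟩ := exists_lipschitzOnWith_closedBall_of_differentiableOn hU hL hDU
  obtain ⟨ε', hε', f₁, hf₁, C₂, hC₂, solve⟩ := resonance_string_contraction_general k₀ ε hk₀' hε
    L K hK f₀ C₁ hf₀ c hc1 fun f hf => LipschitzOnWith.of_dist_le_mul fun k hk k' hk' => by
      simpa only [dist_eq_norm] using hc2 k hk k' hk' f hf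
  refine ⟨ε', hε', f₁, hf₁, C₂, hC₂, fun f hf η₀ hη₀ => solve f hf η₀ ?_⟩
  rwa [← Complex.ofReal_sub, Complex.norm_real]
end

section
/- For every k₀ > 0 and L ∈ ℝ there exist f₀ > 0, ε > 0, C > 0 and functions a₁, a₂ : (k₀-ε, k₀+ε) × (0, f₀) → ℂ with |a_j(k,f) - 1| ≤ C f for j = 1, 2, such that for all real k ∈ (k₀-ε, k₀+ε) and all f ∈ (0, f₀), setting η = k² - f L (which is positive), one has Ai( f^{1/3}(L - k²/f) ) = f^{1/6} e^{-iπ/4} (1/(2 √π η^{1/4})) ( e^{2 i η^{3/2}/(3f)} a₁(k,f) + i e^{-2 i η^{3/2}/(3f)} a₂(k,f) ). -/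
open Filter MeasureTheory Real

/-!
After rescaling, the phase of the Airy integral at a negative argument has the saddle points `±1`
and a large parameter `Λ = η^{3/2} / f`. The half-integral over `t > 0` is deformed, by Cauchy's
theorem, to the segment from `0` to `-i` followed by the line of steepest descent through the
saddle `1`, and the half-integral over `t < 0` is its conjugate. The segment contributes a purely
imaginary number and cancels, so `Ai` is *exactly* a saddle contribution plus its conjugate, and
`a₂` and `a₁` are these contributions divided by their Gaussian approximations. The relative
error is `O(1 / Λ)`, not merely `O(1 / √Λ)`, because the first correction, which comes from the
cubic part of the phase, is odd and integrates to `0`.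
-/

open Complex (I)
open scoped Topology ComplexConjugate Nat

section Primitive

variable {E : Type*} [NormedAddCommGroup E] [NormedSpace ℂ E] [CompleteSpace E] {h G : ℂ → E}

lemma smul_intervalIntegral_line_eq_sub (hG : ∀ z, HasDerivAt G (h z) z) (hh : Continuous h)
    (z c : ℂ) (a b : ℝ) :
    c • ∫ t in a..b, h (z + t * c) = G (z + b * c) - G (z + a * c) := by
  have hline (t : ℝ) : HasDerivAt (fun t : ℝ ↦ z + t * c) c t := by
    simpa using (Complex.ofRealCLM.hasDerivAt.mul_const c).const_add z
  rw [← intervalIntegral.integral_smul]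
  exact intervalIntegral.integral_eq_sub_of_hasDerivAt
    (fun t _ ↦ (hG _).scomp t (hline t)) (Continuous.intervalIntegrable (by fun_prop) _ _)

-- The path runs from `0` down to `-I`, along the line of slope `1` through `1`, and back down
-- to `R`.
lemma intervalIntegral_eq_saddle_contour (hh : Differentiable ℂ h) (R : ℝ) :
    ∫ t in (0 : ℝ)..R, h t =
      I • (∫ t in (0 : ℝ)..(-1), h (t * I)) +
        (1 + I) • (∫ v in (-1 : ℝ)..(R - 1), h (1 + v * (1 + I))) -
        I • (∫ y in (0 : ℝ)..(R - 1), h (R + y * I)) := by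
  obtain ⟨G, hG⟩ := hh.isExactOn_univ
  have line := smul_intervalIntegral_line_eq_sub (fun z ↦ hG z trivial) hh.continuous
  have real_axis : ∫ t in (0 : ℝ)..R, h t = G R - G 0 := by simpa using line 0 1 0 R
  have imaginary_axis : I • (∫ t in (0 : ℝ)..(-1), h (t * I)) = G (-I) - G 0 := by
    simpa using line 0 I 0 (-1)
  have diagonal : (1 + I) • (∫ v in (-1 : ℝ)..(R - 1), h (1 + v * (1 + I))) =
      G (R + (R - 1 : ℝ) * I) - G (-I) := by
    rw [line]
    congr 2 <;> push_cast <;> ring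
  have vertical : I • (∫ y in (0 : ℝ)..(R - 1), h (R + y * I)) = G (R + (R - 1 : ℝ) * I) - G R := by
    simpa using line R I 0 (R - 1)
  rw [real_axis, imaginary_axis, diagonal, vertical]
  abel

end Primitive

lemma intervalIntegral_neg_self_eq_add_conj {F : ℝ → ℂ} (hF : Continuous F)
    (hneg : ∀ t, F (-t) = conj (F t)) (R : ℝ) :
    ∫ t in (-R)..R, F t = (∫ t in (0 : ℝ)..R, F t) + conj (∫ t in (0 : ℝ)..R, F t) := by
  have left_half : ∫ t in (-R)..0, F t = conj (∫ t in (0 : ℝ)..R, F t) := by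
    rw [← intervalIntegral.intervalIntegral_conj, ← neg_zero, ← intervalIntegral.integral_comp_neg]
    simp only [hneg, neg_zero]
  rw [← intervalIntegral.integral_add_adjacent_intervals (hF.intervalIntegrable _ 0)
    (hF.intervalIntegrable _ _), left_half, add_comm]

/-- The Airy integrand `e^{i(t³/3 + xt)}` at `x = -Λ^{2/3}`, in the variable `s = t / Λ^{1/3}`
which fixes the saddle points of the phase at `±1`. -/
noncomputable def airyKernel (Λ : ℝ) (s : ℂ) : ℂ := Complex.exp (I * Λ * (s ^ 3 / 3 - s))

lemma differentiable_airyKernel (Λ : ℝ) : Differentiable ℂ (airyKernel Λ) := by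
  unfold airyKernel
  fun_prop

lemma conj_airyKernel (Λ : ℝ) (s : ℂ) : conj (airyKernel Λ s) = airyKernel Λ (-conj s) := by
  rw [airyKernel, airyKernel, ← Complex.exp_conj]
  congr 1
  simp only [map_mul, map_sub, map_div₀, map_pow, Complex.conj_I, Complex.conj_ofReal,
    Complex.conj_ofNat]
  ring

lemma airyKernel_ofReal_mul_I (Λ t : ℝ) :
    airyKernel Λ (t * I) = (exp (Λ * (t ^ 3 / 3 + t)) : ℝ) := by
  rw [airyKernel, Complex.ofReal_exp]
  congr 1
  push_cast
  linear_combination (Λ * (t ^ 3 * (I ^ 2 - 1) / 3 - t) : ℂ) * Complex.I_sq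

lemma norm_airyKernel (Λ x y : ℝ) :
    ‖airyKernel Λ (x + y * I)‖ = exp (-(Λ * y * (x ^ 2 - y ^ 2 / 3 - 1))) := by
  have phase : I * Λ * ((x + y * I) ^ 3 / 3 - (x + y * I)) =
      (-(Λ * y * (x ^ 2 - y ^ 2 / 3 - 1)) : ℝ) + (Λ * (x ^ 3 / 3 - x * y ^ 2 - x) : ℝ) * I := by
    push_cast
    linear_combination
      (Λ * (x ^ 2 * y + x * y ^ 2 * I + y ^ 3 * (I ^ 2 - 1) / 3 - y) : ℂ) * Complex.I_sq
  rw [airyKernel, phase, Complex.norm_exp]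
  simp only [Complex.add_re, Complex.ofReal_re, Complex.re_ofReal_mul, Complex.I_re, mul_zero,
    add_zero]

lemma norm_airyKernel_le {Λ x y : ℝ} (hΛ : 0 ≤ Λ) (hx : 3 ≤ x) (hy : 0 ≤ y) (hyx : y ≤ x) :
    ‖airyKernel Λ (x + y * I)‖ ≤ exp (-(Λ * x) * y) := by
  have decay : x ≤ x ^ 2 - y ^ 2 / 3 - 1 := by nlinarith
  rw [norm_airyKernel, exp_le_exp]
  nlinarith [mul_le_mul_of_nonneg_left decay (mul_nonneg hΛ hy)]

lemma norm_integral_airyKernel_vertical_le {Λ x Y : ℝ} (hΛ : 0 < Λ) (hx : 3 ≤ x) (hY : 0 ≤ Y)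
    (hYx : Y ≤ x) : ‖∫ y in (0 : ℝ)..Y, airyKernel Λ (x + y * I)‖ ≤ (Λ * x)⁻¹ := by
  have hΛx : 0 < Λ * x := by positivity
  calc ‖∫ y in (0 : ℝ)..Y, airyKernel Λ (x + y * I)‖
      ≤ ∫ y in (0 : ℝ)..Y, exp (-(Λ * x) * y) :=
        intervalIntegral.norm_integral_le_of_norm_le hY
          (ae_of_all _ fun y hy ↦ norm_airyKernel_le hΛ.le hx hy.1.le (hy.2.trans hYx))
          (Continuous.intervalIntegrable (by fun_prop) _ _)
    _ = (Λ * x)⁻¹ * (1 - exp (-(Λ * x) * Y)) := by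
        rw [intervalIntegral.integral_comp_mul_left (fun y ↦ exp y) (neg_ne_zero.2 hΛx.ne'),
          integral_exp, smul_eq_mul, mul_zero, exp_zero]
        ring
    _ ≤ (Λ * x)⁻¹ := mul_le_of_le_one_right (by positivity) (by linarith [exp_pos (-(Λ * x) * Y)])

lemma tendsto_integral_airyKernel_vertical {Λ : ℝ} (hΛ : 0 < Λ) :
    Tendsto (fun R : ℝ ↦ ∫ y in (0 : ℝ)..(R - 1), airyKernel Λ (R + y * I)) atTop (𝓝 0) := by
  refine squeeze_zero_norm' ?_ (tendsto_inv_atTop_zero.comp (tendsto_id.const_mul_atTop hΛ))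
  filter_upwards [eventually_ge_atTop 3] with R hR
  exact norm_integral_airyKernel_vertical_le hΛ hR (by linarith) (by linarith)

section GaussianMoments

variable {b : ℝ}

lemma integrable_pow_mul_exp_neg_mul_sq (hb : 0 < b) (n : ℕ) :
    Integrable fun v : ℝ ↦ v ^ n * exp (-b * v ^ 2) := by
  simpa only [rpow_natCast] using
    integrable_rpow_mul_exp_neg_mul_sq hb (neg_one_lt_zero.trans_le n.cast_nonneg)

lemma integral_odd_pow_mul_exp_neg_mul_sq (b : ℝ) {n : ℕ} (hn : Odd n) :
    ∫ v : ℝ, v ^ n * exp (-b * v ^ 2) = 0 := by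
  have reflection := integral_neg_eq_self (fun v : ℝ ↦ v ^ n * exp (-b * v ^ 2)) volume
  simp only [hn.neg_pow, neg_sq, neg_mul, integral_neg] at reflection ⊢
  linarith

lemma integral_even_pow_mul_exp_neg_mul_sq (hb : 0 < b) {n : ℕ} (hn : Even n) :
    ∫ v : ℝ, v ^ n * exp (-b * v ^ 2) =
      b ^ (-((n : ℝ) + 1) / 2) * Gamma (((n : ℝ) + 1) / 2) := by
  have half_line := integral_rpow_mul_exp_neg_mul_rpow two_pos
    (neg_one_lt_zero.trans_le n.cast_nonneg) hb
  calc ∫ v : ℝ, v ^ n * exp (-b * v ^ 2)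
      = ∫ v : ℝ, |v| ^ n * exp (-b * |v| ^ 2) := by simp only [hn.pow_abs, sq_abs]
    _ = 2 * ∫ v in Set.Ioi (0 : ℝ), v ^ n * exp (-b * v ^ 2) :=
        integral_comp_abs (f := fun v ↦ v ^ n * exp (-b * v ^ 2))
    _ = b ^ (-((n : ℝ) + 1) / 2) * Gamma (((n : ℝ) + 1) / 2) := by
        simp only [rpow_natCast, rpow_two] at half_line
        rw [half_line]
        ring

lemma integral_pow_six_mul_exp_neg_mul_sq (hb : 0 < b) :
    ∫ v : ℝ, v ^ 6 * exp (-b * v ^ 2) = 15 / 8 * √π / (b ^ 3 * √b) := by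
  have gamma : Gamma (7 / 2) = 15 / 8 * √π := by
    rw [show (7 / 2 : ℝ) = (3 : ℕ) + 1 / 2 by norm_num, Gamma_nat_add_half]
    rw [show (2 * 3 - 1)‼ = 15 by rfl]
    ring
  have power : b ^ (-(7 / 2) : ℝ) = (b ^ 3 * √b)⁻¹ := by
    rw [rpow_neg hb.le, sqrt_eq_rpow, ← rpow_natCast, ← rpow_add hb]
    norm_num
  rw [integral_even_pow_mul_exp_neg_mul_sq hb (by decide),
    show (((6 : ℕ) : ℝ) + 1) / 2 = 7 / 2 by norm_num,
    show -(((6 : ℕ) : ℝ) + 1) / 2 = -(7 / 2) by norm_num, gamma, power]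
  ring

end GaussianMoments

/-- The cubic part of the phase of `airyKernel` along the line `s = 1 + (1 + i) v` of steepest
descent through the saddle point `1`. -/
noncomputable def saddleCubic (Λ v : ℝ) : ℂ := -(2 / 3 * Λ * v ^ 3 : ℝ) * (1 + I)

/-- The restriction of `airyKernel` to the line `s = 1 + (1 + i) v` of steepest descent, divided
by its value at the saddle point `1`. -/
noncomputable def saddleProfile (Λ v : ℝ) : ℂ :=
  (exp (-(2 * Λ) * v ^ 2) : ℝ) * Complex.exp (saddleCubic Λ v)

lemma continuous_saddleProfile (Λ : ℝ) : Continuous (saddleProfile Λ) := by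
  unfold saddleProfile saddleCubic
  fun_prop

lemma airyKernel_saddle_line (Λ v : ℝ) :
    airyKernel Λ (1 + v * (1 + I)) = Complex.exp (-(2 * I * Λ / 3)) * saddleProfile Λ v := by
  rw [airyKernel, saddleProfile, saddleCubic, Complex.ofReal_exp, ← Complex.exp_add,
    ← Complex.exp_add]
  congr 1
  push_cast
  linear_combination (Λ * (v ^ 2 * (I + 2) + v ^ 3 * (I ^ 2 + 3 * I + 2) / 3) : ℂ) * Complex.I_sq

lemma norm_saddleProfile (Λ v : ℝ) :
    ‖saddleProfile Λ v‖ = exp (-(2 * Λ) * v ^ 2) * exp (-(2 / 3 * Λ * v ^ 3)) := by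
  have re_cubic : (saddleCubic Λ v).re = -(2 / 3 * Λ * v ^ 3) := by
    rw [saddleCubic, ← Complex.ofReal_neg, Complex.re_ofReal_mul]
    simp
  rw [saddleProfile, norm_mul, Complex.norm_real, norm_of_nonneg (exp_pos _).le, Complex.norm_exp,
    re_cubic]

lemma integrableOn_saddleProfile {Λ : ℝ} (hΛ : 0 < Λ) (a : ℝ) :
    IntegrableOn (saddleProfile Λ) (Set.Ioi a) := by
  have dominated : ∀ v ∈ Set.Ioi a,
      ‖saddleProfile Λ v‖ ≤ exp (-(2 * Λ) * v ^ 2) * exp (-(2 / 3 * Λ * a ^ 3)) := by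
    intro v hv
    rw [norm_saddleProfile]
    have cube_le : a ^ 3 ≤ v ^ 3 := (show Odd 3 by decide).pow_le_pow.2 (Set.mem_Ioi.1 hv).le
    exact mul_le_mul_of_nonneg_left (exp_le_exp.2 (by nlinarith)) (exp_pos _).le
  exact ((integrable_exp_neg_mul_sq (by positivity)).mul_const _).integrableOn.mono'
    (continuous_saddleProfile Λ).aestronglyMeasurable
    (ae_restrict_of_forall_mem measurableSet_Ioi dominated)

lemma norm_saddleCubic_sq (Λ v : ℝ) : ‖saddleCubic Λ v‖ ^ 2 = 8 / 9 * (Λ ^ 2 * v ^ 6) := by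
  rw [saddleCubic, norm_mul, mul_pow, norm_neg, Complex.norm_real, norm_eq_abs, sq_abs,
    ← Complex.normSq_eq_norm_sq (1 + I), show Complex.normSq (1 + I) = 2 by
      norm_num [Complex.normSq_apply]]
  ring

lemma norm_saddleCubic_le {Λ : ℝ} (hΛ : 0 ≤ Λ) (v : ℝ) : ‖saddleCubic Λ v‖ ≤ Λ * |v| ^ 3 := by
  refine (sq_le_sq₀ (norm_nonneg _) (by positivity)).1 ?_
  calc ‖saddleCubic Λ v‖ ^ 2 = 8 / 9 * (Λ ^ 2 * v ^ 6) := norm_saddleCubic_sq Λ v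
    _ ≤ Λ ^ 2 * v ^ 6 := by linarith [show 0 ≤ Λ ^ 2 * v ^ 6 by positivity]
    _ = (Λ * |v| ^ 3) ^ 2 := by rw [mul_pow, ← pow_mul, Even.pow_abs (by decide)]

lemma norm_exp_sub_one_add_self_le (w : ℂ) :
    ‖Complex.exp w - (1 + w)‖ ≤ ‖w‖ ^ 2 * exp ‖w‖ := by
  simpa [Finset.sum_range_succ] using Complex.norm_exp_sub_sum_le_norm_mul_exp w 2

lemma norm_saddleProfile_sub_le_of_abs_le_one {Λ v : ℝ} (hΛ : 0 ≤ Λ) (hv : |v| ≤ 1) :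
    ‖saddleProfile Λ v - (exp (-(2 * Λ) * v ^ 2) : ℝ) * (1 + saddleCubic Λ v)‖ ≤
      Λ ^ 2 * v ^ 6 * exp (-Λ * v ^ 2) := by
  have cubic_le : ‖saddleCubic Λ v‖ ≤ Λ * v ^ 2 := by
    refine (norm_saddleCubic_le hΛ v).trans ?_
    rw [← sq_abs v]
    exact mul_le_mul_of_nonneg_left (pow_le_pow_of_le_one (abs_nonneg v) hv (by norm_num)) hΛ
  rw [saddleProfile, ← mul_sub, norm_mul, Complex.norm_real, norm_of_nonneg (exp_pos _).le]
  calc exp (-(2 * Λ) * v ^ 2) * ‖Complex.exp (saddleCubic Λ v) - (1 + saddleCubic Λ v)‖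
      ≤ exp (-(2 * Λ) * v ^ 2) * (‖saddleCubic Λ v‖ ^ 2 * exp (Λ * v ^ 2)) := by
        gcongr
        exact (norm_exp_sub_one_add_self_le _).trans (by gcongr)
    _ = 8 / 9 * (Λ ^ 2 * v ^ 6 * exp (-Λ * v ^ 2)) := by
        rw [norm_saddleCubic_sq, show -Λ * v ^ 2 = -(2 * Λ) * v ^ 2 + Λ * v ^ 2 by ring, exp_add]
        ring
    _ ≤ Λ ^ 2 * v ^ 6 * exp (-Λ * v ^ 2) := by
        linarith [show 0 ≤ Λ ^ 2 * v ^ 6 * exp (-Λ * v ^ 2) by positivity]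

lemma norm_indicator_saddleProfile_le {Λ v : ℝ} (hΛ : 0 ≤ Λ) (hv : 1 ≤ |v|) :
    ‖(Set.Ioi (-1)).indicator (saddleProfile Λ) v‖ ≤ exp (-(2 * Λ) * v ^ 2) := by
  rcases le_abs'.1 hv with hv | hv
  · rw [Set.indicator_of_notMem (by simpa using hv), norm_zero]
    positivity
  · refine (norm_indicator_le_norm_self _ _).trans ?_
    rw [norm_saddleProfile]
    exact mul_le_of_le_one_right (exp_pos _).le (exp_le_one_iff.2 (neg_nonpos.2 (by positivity)))

lemma one_add_norm_one_add_saddleCubic_le {Λ v : ℝ} (hΛ : 1 ≤ Λ) (hv : 1 ≤ |v|) :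
    1 + ‖1 + saddleCubic Λ v‖ ≤ 3 * (Λ ^ 2 * v ^ 6) := by
  have one_le : 1 ≤ Λ * |v| ^ 3 := one_le_mul_of_one_le_of_one_le hΛ (one_le_pow₀ hv)
  have sq_eq : Λ ^ 2 * v ^ 6 = (Λ * |v| ^ 3) ^ 2 := by
    rw [mul_pow, ← pow_mul, Even.pow_abs (by decide)]
  have cubic_le := norm_saddleCubic_le (zero_le_one.trans hΛ) v
  have triangle := norm_add_le 1 (saddleCubic Λ v)
  rw [norm_one] at triangle
  nlinarith

lemma norm_indicator_saddleProfile_sub_le {Λ : ℝ} (hΛ : 1 ≤ Λ) (v : ℝ) :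
    ‖(Set.Ioi (-1)).indicator (saddleProfile Λ) v -
        (exp (-(2 * Λ) * v ^ 2) : ℝ) * (1 + saddleCubic Λ v)‖ ≤
      3 * Λ ^ 2 * (v ^ 6 * exp (-Λ * v ^ 2)) := by
  have hΛ₀ : 0 ≤ Λ := zero_le_one.trans hΛ
  rcases lt_or_ge |v| 1 with hv | hv
  · rw [Set.indicator_of_mem (Set.mem_Ioi.2 (abs_lt.1 hv).1)]
    refine (norm_saddleProfile_sub_le_of_abs_le_one hΛ₀ hv.le).trans ?_
    linarith [show 0 ≤ Λ ^ 2 * v ^ 6 * exp (-Λ * v ^ 2) by positivity]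
  · calc _ ≤ exp (-(2 * Λ) * v ^ 2) + exp (-(2 * Λ) * v ^ 2) * ‖1 + saddleCubic Λ v‖ := by
          refine (norm_sub_le _ _).trans ?_
          rw [norm_mul, Complex.norm_real, norm_of_nonneg (exp_pos _).le]
          gcongr
          exact norm_indicator_saddleProfile_le hΛ₀ hv
      _ = exp (-(2 * Λ) * v ^ 2) * (1 + ‖1 + saddleCubic Λ v‖) := by ring
      _ ≤ exp (-Λ * v ^ 2) * (3 * (Λ ^ 2 * v ^ 6)) := by
          gcongr
          · linarith
          · exact one_add_norm_one_add_saddleCubic_le hΛ hv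
      _ = _ := by ring

lemma gaussian_mul_one_add_saddleCubic (Λ v : ℝ) :
    ((exp (-(2 * Λ) * v ^ 2) : ℝ) : ℂ) * (1 + saddleCubic Λ v) =
      (exp (-(2 * Λ) * v ^ 2) : ℝ) +
        -(2 / 3 * Λ * (1 + I)) * (v ^ 3 * exp (-(2 * Λ) * v ^ 2) : ℝ) := by
  rw [saddleCubic]
  push_cast
  ring

lemma integrable_gaussian_mul_one_add_saddleCubic {Λ : ℝ} (hΛ : 0 < Λ) :
    Integrable fun v : ℝ ↦ ((exp (-(2 * Λ) * v ^ 2) : ℝ) : ℂ) * (1 + saddleCubic Λ v) := by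
  simp only [gaussian_mul_one_add_saddleCubic]
  exact (integrable_exp_neg_mul_sq (by positivity)).ofReal.add
    ((integrable_pow_mul_exp_neg_mul_sq (by positivity) 3).ofReal.const_mul _)

lemma integral_gaussian_mul_one_add_saddleCubic {Λ : ℝ} (hΛ : 0 < Λ) :
    ∫ v : ℝ, ((exp (-(2 * Λ) * v ^ 2) : ℝ) : ℂ) * (1 + saddleCubic Λ v) = √(π / (2 * Λ)) := by
  have h2Λ : 0 < 2 * Λ := by positivity
  simp only [gaussian_mul_one_add_saddleCubic]
  rw [integral_add (integrable_exp_neg_mul_sq h2Λ).ofReal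
      ((integrable_pow_mul_exp_neg_mul_sq h2Λ 3).ofReal.const_mul _),
    integral_const_mul, integral_complex_ofReal, integral_complex_ofReal, integral_gaussian,
    integral_odd_pow_mul_exp_neg_mul_sq _ (by decide)]
  simp

lemma norm_integral_saddleProfile_sub_le {Λ : ℝ} (hΛ : 1 ≤ Λ) :
    ‖(∫ v in Set.Ioi (-1), saddleProfile Λ v) - √(π / (2 * Λ))‖ ≤ 45 / 8 * √π / (Λ * √Λ) := by
  have hΛ₀ : 0 < Λ := zero_lt_one.trans_le hΛ
  have profile_integrable := (integrable_indicator_iff measurableSet_Ioi).2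
    (integrableOn_saddleProfile hΛ₀ (-1))
  rw [← integral_indicator measurableSet_Ioi, ← integral_gaussian_mul_one_add_saddleCubic hΛ₀,
    ← integral_sub profile_integrable (integrable_gaussian_mul_one_add_saddleCubic hΛ₀)]
  calc _ ≤ ∫ v : ℝ, 3 * Λ ^ 2 * (v ^ 6 * exp (-Λ * v ^ 2)) :=
        norm_integral_le_of_norm_le ((integrable_pow_mul_exp_neg_mul_sq hΛ₀ 6).const_mul _)
          (ae_of_all _ (norm_indicator_saddleProfile_sub_le hΛ))
    _ = 45 / 8 * √π / (Λ * √Λ) := by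
        rw [integral_const_mul, integral_pow_six_mul_exp_neg_mul_sq hΛ₀]
        field_simp
        ring

/-- The relative size of the contribution of the saddle point `1` to the Airy integral, compared
with its leading Gaussian approximation `√(π / (2Λ))`. It tends to `1` as `Λ → ∞`. -/
noncomputable def airyAmplitude (Λ : ℝ) : ℂ :=
  √(2 * Λ / π) * ∫ v in Set.Ioi (-1), saddleProfile Λ v

lemma integral_saddleProfile {Λ : ℝ} (hΛ : 0 < Λ) :
    ∫ v in Set.Ioi (-1), saddleProfile Λ v = √(π / (2 * Λ)) * airyAmplitude Λ := by
  rw [airyAmplitude, ← inv_div (2 * Λ) π, sqrt_inv, Complex.ofReal_inv, inv_mul_cancel_left₀]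
  exact_mod_cast (by positivity : √(2 * Λ / π) ≠ 0)

lemma norm_airyAmplitude_sub_one_le {Λ : ℝ} (hΛ : 1 ≤ Λ) : ‖airyAmplitude Λ - 1‖ ≤ 8 / Λ := by
  have hΛ₀ : 0 < Λ := zero_lt_one.trans_le hΛ
  have normalization : √(2 * Λ / π) * √(π / (2 * Λ)) = 1 := by
    rw [← inv_div (2 * Λ) π, sqrt_inv,
      mul_inv_cancel₀ (sqrt_ne_zero'.2 (div_pos (mul_pos two_pos hΛ₀) pi_pos))]
  have factor : airyAmplitude Λ - 1 =
      √(2 * Λ / π) * ((∫ v in Set.Ioi (-1), saddleProfile Λ v) - √(π / (2 * Λ))) := by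
    rw [mul_sub, ← airyAmplitude, ← Complex.ofReal_mul, normalization, Complex.ofReal_one]
  have sqrt_two_le : √2 ≤ 64 / 45 := (sqrt_le_left (by norm_num)).2 (by norm_num)
  rw [factor, norm_mul, Complex.norm_real, norm_of_nonneg (sqrt_nonneg _)]
  calc √(2 * Λ / π) * ‖(∫ v in Set.Ioi (-1), saddleProfile Λ v) - √(π / (2 * Λ))‖
      ≤ √(2 * Λ / π) * (45 / 8 * √π / (Λ * √Λ)) := by
        gcongr
        exact norm_integral_saddleProfile_sub_le hΛ
    _ = 45 / 8 * √2 / Λ := by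
        rw [sqrt_div (by positivity), sqrt_mul zero_le_two]
        field_simp
    _ ≤ 8 / Λ := by
        gcongr
        linarith

lemma tendsto_integral_zero_airyKernel {Λ : ℝ} (hΛ : 0 < Λ) :
    Tendsto (fun R : ℝ ↦ ∫ t in (0 : ℝ)..R, airyKernel Λ t) atTop
      (𝓝 (I * (∫ t in (0 : ℝ)..(-1), exp (Λ * (t ^ 3 / 3 + t)) : ℝ) +
        (1 + I) * (Complex.exp (-(2 * I * Λ / 3)) * ∫ v in Set.Ioi (-1), saddleProfile Λ v))) := by
  have diagonal : Tendsto (fun R : ℝ ↦ ∫ v in (-1 : ℝ)..(R - 1), saddleProfile Λ v) atTop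
      (𝓝 (∫ v in Set.Ioi (-1), saddleProfile Λ v)) :=
    intervalIntegral_tendsto_integral_Ioi _ (integrableOn_saddleProfile hΛ _)
      (tendsto_atTop_add_const_right _ (-1) tendsto_id)
  have contour (R : ℝ) := intervalIntegral_eq_saddle_contour (differentiable_airyKernel Λ) R
  simp only [airyKernel_ofReal_mul_I, airyKernel_saddle_line, smul_eq_mul,
    intervalIntegral.integral_const_mul, intervalIntegral.integral_ofReal] at contour
  simp only [contour]
  simpa only [mul_zero, sub_zero] using
    ((diagonal.const_mul _).const_mul _).const_add _ |>.sub
      ((tendsto_integral_airyKernel_vertical hΛ).const_mul I)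

lemma tendsto_integral_airyKernel {Λ : ℝ} (hΛ : 0 < Λ) :
    Tendsto (fun R : ℝ ↦ ∫ t in (-R)..R, airyKernel Λ t) atTop
      (𝓝 (√(π / (2 * Λ)) *
        ((1 - I) * (Complex.exp (2 * I * Λ / 3) * conj (airyAmplitude Λ)) +
          (1 + I) * (Complex.exp (-(2 * I * Λ / 3)) * airyAmplitude Λ)))) := by
  have fold (R : ℝ) : ∫ t in (-R)..R, airyKernel Λ t =
      (∫ t in (0 : ℝ)..R, airyKernel Λ t) + conj (∫ t in (0 : ℝ)..R, airyKernel Λ t) :=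
    intervalIntegral_neg_self_eq_add_conj
      ((differentiable_airyKernel Λ).continuous.comp Complex.continuous_ofReal)
      (fun t ↦ by simp only [Function.comp_apply, conj_airyKernel, Complex.conj_ofReal,
        Complex.ofReal_neg]) R
  have half := tendsto_integral_zero_airyKernel hΛ
  rw [integral_saddleProfile hΛ] at half
  convert (half.add ((Complex.continuous_conj.tendsto _).comp half)).congr
    fun R ↦ (fold R).symm using 2
  simp only [map_add, map_mul, map_one, map_neg, map_div₀, ← Complex.exp_conj, Complex.conj_I,
    Complex.conj_ofReal, Complex.conj_ofNat]
  ring_nf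

lemma Ai_neg_sq_eq_of_tendsto {r : ℝ} (hr : 0 < r) {z : ℂ}
    (hz : Tendsto (fun R : ℝ ↦ ∫ t in (-R)..R, airyKernel (r ^ 3) t) atTop (𝓝 z)) :
    Ai (-r ^ 2) = r / (2 * π) * z := by
  have rescale (t : ℝ) : Complex.exp (I * ((t : ℂ) ^ 3 / 3 + (-r ^ 2 : ℝ) * t)) =
      airyKernel (r ^ 3) (t / r : ℝ) := by
    have : (r : ℂ) ≠ 0 := by exact_mod_cast hr.ne'
    rw [airyKernel]
    congr 1
    push_cast
    field_simp
    ring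
  have substitution (R : ℝ) :
      ∫ t in (-R)..R, Complex.exp (I * ((t : ℂ) ^ 3 / 3 + (-r ^ 2 : ℝ) * t)) =
        r * ∫ t in (-(R / r))..(R / r), airyKernel (r ^ 3) t := by
    simp only [rescale]
    rw [intervalIntegral.integral_comp_div (fun t : ℝ ↦ airyKernel (r ^ 3) t) hr.ne',
      Complex.real_smul, neg_div]
  have limit := (hz.comp (tendsto_id.atTop_div_const hr)).const_mul (r : ℂ)
  rw [Ai, (limit.congr fun R ↦ (substitution R).symm).limUnder_eq]
  push_cast
  ring

lemma exp_neg_pi_div_four_mul_I :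
    Complex.exp (-(π / 4 : ℝ) * I) = (√2 / 2 : ℝ) * (1 - I) := by
  rw [← Complex.ofReal_neg, Complex.exp_mul_I, ← Complex.ofReal_cos, ← Complex.ofReal_sin,
    cos_neg, sin_neg, cos_pi_div_four, sin_pi_div_four]
  push_cast
  ring

lemma Ai_neg_sq {r : ℝ} (hr : 0 < r) :
    Ai (-r ^ 2) = Complex.exp (-(π / 4 : ℝ) * I) / (2 * √π * √r) *
      (Complex.exp (2 * I * (r ^ 3 : ℝ) / 3) * conj (airyAmplitude (r ^ 3)) +
        I * Complex.exp (-(2 * I * (r ^ 3 : ℝ) / 3)) * airyAmplitude (r ^ 3)) := by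
  have prefactor : r / (2 * π) * √(π / (2 * r ^ 3)) = √2 / 2 / (2 * √π * √r) := by
    have sqrt_cube : √(2 * r ^ 3) = √2 * (r * √r) := by
      rw [sqrt_mul zero_le_two, pow_succ, sqrt_mul (by positivity), sqrt_sq hr.le]
    rw [sqrt_div pi_pos.le, sqrt_cube]
    field_simp
    rw [sq_sqrt pi_pos.le, sq_sqrt zero_le_two, mul_comm]
  have prefactor_complex := congrArg ((↑) : ℝ → ℂ) prefactor
  push_cast at prefactor_complex
  rw [Ai_neg_sq_eq_of_tendsto hr (tendsto_integral_airyKernel (pow_pos hr 3)), ← mul_assoc,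
    prefactor_complex, exp_neg_pi_div_four_mul_I]
  push_cast
  linear_combination (√2 / 2 / (2 * √π * √r) * airyAmplitude (r ^ 3) *
    Complex.exp (-(2 * I * r ^ 3 / 3)) : ℂ) * Complex.I_sq

lemma Ai_rpow_mul_div {f η : ℝ} (hf : 0 < f) (hη : 0 < η) :
    Ai (f ^ ((1 : ℝ) / 3) * -(η / f)) =
      ((f ^ ((1 : ℝ) / 6) : ℝ) : ℂ) * Complex.exp (-(π / 4 : ℝ) * I) *
        (1 / (2 * √π * ((η ^ ((1 : ℝ) / 4) : ℝ) : ℂ))) *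
        (Complex.exp (2 * I * ((η ^ ((3 : ℝ) / 2) : ℝ) : ℂ) / (3 * f)) *
            conj (airyAmplitude (η ^ ((3 : ℝ) / 2) / f)) +
          I * Complex.exp (-(2 * I * ((η ^ ((3 : ℝ) / 2) : ℝ) : ℂ)) / (3 * f)) *
            airyAmplitude (η ^ ((3 : ℝ) / 2) / f)) := by
  set r : ℝ := η ^ ((1 : ℝ) / 2) / f ^ ((1 : ℝ) / 3) with r_def
  have hr : 0 < r := by positivity
  have r_pow (c : ℝ) : r ^ c = η ^ (1 / 2 * c) / f ^ (1 / 3 * c) := by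
    rw [r_def, div_rpow (by positivity) (by positivity), ← rpow_mul hη.le, ← rpow_mul hf.le]
  have cube : r ^ 3 = η ^ ((3 : ℝ) / 2) / f := by
    rw [← rpow_natCast, r_pow]
    norm_num
  have root : √r = η ^ ((1 : ℝ) / 4) / f ^ ((1 : ℝ) / 6) := by
    rw [sqrt_eq_rpow, r_pow]
    norm_num
  have argument : f ^ ((1 : ℝ) / 3) * -(η / f) = -r ^ 2 := by
    have quotient : f ^ ((1 : ℝ) / 3) / f = (f ^ ((2 : ℝ) / 3))⁻¹ := by
      rw [← rpow_sub_one hf.ne', ← rpow_neg hf.le]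
      norm_num
    have square : r ^ 2 = η / f ^ ((2 : ℝ) / 3) := by
      rw [← rpow_natCast, r_pow]
      norm_num
    rw [square, mul_neg, mul_div_left_comm, quotient, ← div_eq_mul_inv]
  rw [argument, Ai_neg_sq hr, cube, root]
  have : ((f ^ ((1 : ℝ) / 6) : ℝ) : ℂ) ≠ 0 := by exact_mod_cast (by positivity)
  push_cast
  field_simp

lemma norm_airyAmplitude_rpow_div_sub_one_le {f η m : ℝ} (hf : 0 < f) (hm : 0 < m) (hη : m ≤ η)
    (hfm : f ≤ m ^ ((3 : ℝ) / 2)) :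
    ‖airyAmplitude (η ^ ((3 : ℝ) / 2) / f) - 1‖ ≤ 8 / m ^ ((3 : ℝ) / 2) * f := by
  have pow_le : m ^ ((3 : ℝ) / 2) ≤ η ^ ((3 : ℝ) / 2) := rpow_le_rpow hm.le hη (by norm_num)
  calc ‖airyAmplitude (η ^ ((3 : ℝ) / 2) / f) - 1‖
      ≤ 8 / (η ^ ((3 : ℝ) / 2) / f) :=
        norm_airyAmplitude_sub_one_le ((one_le_div hf).2 (hfm.trans pow_le))
    _ ≤ 8 / (m ^ ((3 : ℝ) / 2) / f) := by gcongr
    _ = 8 / m ^ ((3 : ℝ) / 2) * f := by rw [div_div_eq_mul_div, mul_div_right_comm]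

lemma half_sq_le_sq_sub_mul {δ f k L : ℝ} (hδ : 0 ≤ δ) (hk : δ ≤ |k|) (hf : 0 ≤ f)
    (hfL : f * |L| ≤ δ ^ 2 / 2) : δ ^ 2 / 2 ≤ k ^ 2 - f * L := by
  have sq_le : δ ^ 2 ≤ k ^ 2 := by simpa only [sq_abs] using pow_le_pow_left₀ hδ hk 2
  linarith [mul_le_mul_of_nonneg_left (le_abs_self L) hf]

theorem airy_uniform_asymptotics_general (δ L : ℝ) (hδ : 0 < δ) :
    ∃ f₀ > (0 : ℝ), ∃ C > (0 : ℝ), ∃ a₁ a₂ : ℝ → ℝ → ℂ,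
      (∀ k : ℝ, δ ≤ |k| → ∀ f ∈ Set.Ioo (0 : ℝ) f₀,
        ‖a₁ k f - 1‖ ≤ C * f ∧ ‖a₂ k f - 1‖ ≤ C * f) ∧
      (∀ k : ℝ, δ ≤ |k| → ∀ f ∈ Set.Ioo (0 : ℝ) f₀,
        0 < k ^ 2 - f * L ∧
        Ai (f ^ ((1:ℝ)/3) * (L - k ^ 2 / f)) =
          ((f ^ ((1:ℝ)/6) : ℝ) : ℂ) * Complex.exp (-(Real.pi / 4 : ℝ) * Complex.I) *
            (1 / (2 * Real.sqrt Real.pi * (((k ^ 2 - f * L) ^ ((1:ℝ)/4) : ℝ) : ℂ))) *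
            (Complex.exp (2 * Complex.I * (((k ^ 2 - f * L) ^ ((3:ℝ)/2) : ℝ) : ℂ) / (3 * f))
                * a₁ k f +
              Complex.I *
                Complex.exp (-(2 * Complex.I * (((k ^ 2 - f * L) ^ ((3:ℝ)/2) : ℝ) : ℂ)) / (3 * f))
                * a₂ k f)) := by
  set m : ℝ := δ ^ 2 / 2
  have hm : 0 < m := by positivity
  have η_ge {k f : ℝ} (hk : δ ≤ |k|)
      (hf : f ∈ Set.Ioo 0 (min (m / (|L| + 1)) (m ^ ((3 : ℝ) / 2)))) : m ≤ k ^ 2 - f * L := by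
    have small := (lt_div_iff₀ (by positivity)).1 (hf.2.trans_le (min_le_left _ _))
    exact half_sq_le_sq_sub_mul hδ.le hk hf.1.le (show f * |L| ≤ m by linarith [hf.1])
  refine ⟨min (m / (|L| + 1)) (m ^ ((3 : ℝ) / 2)), by positivity, 8 / m ^ ((3 : ℝ) / 2),
    by positivity, fun k f ↦ conj (airyAmplitude ((k ^ 2 - f * L) ^ ((3 : ℝ) / 2) / f)),
    fun k f ↦ airyAmplitude ((k ^ 2 - f * L) ^ ((3 : ℝ) / 2) / f), fun k hk f hf ↦ ?_,
    fun k hk f hf ↦ ?_⟩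
  · have amplitude_le := norm_airyAmplitude_rpow_div_sub_one_le hf.1 hm (η_ge hk hf)
      (hf.2.le.trans (min_le_right _ _))
    refine ⟨?_, amplitude_le⟩
    simpa only [map_sub, map_one] using
      (RCLike.norm_conj (airyAmplitude _ - 1)).trans_le amplitude_le
  · have η_pos : 0 < k ^ 2 - f * L := hm.trans_le (η_ge hk hf)
    refine ⟨η_pos, ?_⟩
    rw [← Ai_rpow_mul_div hf.1 η_pos, sub_div, mul_div_cancel_left₀ _ hf.1.ne', neg_sub]

/-- Uniform small-field asymptotics of `Ai(f^{1/3}(L - k²/f))` near a point `k₀ > 0`: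
there exist `f₀, ε, C > 0` and error factors `a₁, a₂` with `|a_j(k,f) - 1| ≤ C f` such that,
with `η = k² - f L > 0`,
`Ai(f^{1/3}(L - k²/f)) = f^{1/6} e^{-iπ/4} (2√π η^{1/4})⁻¹ (e^{2iη^{3/2}/3f} a₁ + i e^{-2iη^{3/2}/3f} a₂)`. -/
theorem airy_uniform_asymptotics (k₀ L : ℝ) (hk₀ : 0 < k₀) :
    ∃ f₀ > (0 : ℝ), ∃ ε > (0 : ℝ), ∃ C > (0 : ℝ), ∃ a₁ a₂ : ℝ → ℝ → ℂ,
      (∀ k ∈ Set.Ioo (k₀ - ε) (k₀ + ε), ∀ f ∈ Set.Ioo (0 : ℝ) f₀,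
        ‖a₁ k f - 1‖ ≤ C * f ∧ ‖a₂ k f - 1‖ ≤ C * f) ∧
      (∀ k ∈ Set.Ioo (k₀ - ε) (k₀ + ε), ∀ f ∈ Set.Ioo (0 : ℝ) f₀,
        0 < k ^ 2 - f * L ∧
        Ai (f ^ ((1:ℝ)/3) * (L - k ^ 2 / f)) =
          ((f ^ ((1:ℝ)/6) : ℝ) : ℂ) * Complex.exp (-(Real.pi / 4 : ℝ) * Complex.I) *
            (1 / (2 * Real.sqrt Real.pi * (((k ^ 2 - f * L) ^ ((1:ℝ)/4) : ℝ) : ℂ))) *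
            (Complex.exp (2 * Complex.I * (((k ^ 2 - f * L) ^ ((3:ℝ)/2) : ℝ) : ℂ) / (3 * f))
                * a₁ k f +
              Complex.I *
                Complex.exp (-(2 * Complex.I * (((k ^ 2 - f * L) ^ ((3:ℝ)/2) : ℝ) : ℂ)) / (3 * f))
                * a₂ k f)) := by
  obtain ⟨f₀, hf₀, C, hC, a₁, a₂, amplitudes, expansion⟩ :=
    airy_uniform_asymptotics_general (k₀ / 2) L (half_pos hk₀)
  have away {k : ℝ} (hk : k ∈ Set.Ioo (k₀ - k₀ / 2) (k₀ + k₀ / 2)) : k₀ / 2 ≤ |k| :=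
    (by linarith [hk.1] : k₀ / 2 ≤ k).trans (le_abs_self k)
  exact ⟨f₀, hf₀, k₀ / 2, half_pos hk₀, C, hC, a₁, a₂,
    fun k hk ↦ amplitudes k (away hk), fun k hk ↦ expansion k (away hk)⟩
end

section
/- Let λ₀ < 0 and set κ = √(-λ₀). Let L > 0, let V : ℝ → ℝ be continuous with support contained in [-L, L], and let Φ : ℝ → ℝ be twice continuously differentiable with -Φ''(x) + V(x)Φ(x) = λ₀ Φ(x) for all x. Suppose there are real constants κ₋ and κ₊ with Φ(x) = κ₋ e^{κ x} for all x ≤ -L and Φ(x) = κ₊ e^{-κ x} for all x ≥ L. Then ∫_ℝ V(x) e^{-κ x} Φ(x) dx = -2 κ₋ κ = -2 κ₋ √(-λ₀). -/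
/-!
The exponential `u(x) = e^{-κx}` solves the free equation `u'' = κ² u`, so `V u Φ = u Φ'' - u'' Φ`
is the derivative of the Wronskian `u Φ' - u' Φ`. This Wronskian vanishes where `Φ` is a multiple
of `e^{-κx}`, and is the constant `2 κ κm` where `Φ` is `κm e^{κx}`; the integral is the difference
of these two boundary values.
-/

open Filter MeasureTheory Topology

section OrderTopology

variable {α : Type*} [TopologicalSpace α] [LinearOrder α] [OrderTopology α] [Nonempty α]
  {p : α → Prop}

lemma eventually_atTop_eventually_nhds [NoMaxOrder α] (h : ∀ᶠ x in atTop, p x) :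
    ∀ᶠ x in atTop, ∀ᶠ y in 𝓝 x, p y := by
  obtain ⟨a, ha⟩ := eventually_atTop.1 h
  filter_upwards [eventually_gt_atTop a] with x hx
  filter_upwards [lt_mem_nhds hx] with y hy using ha y hy.le

lemma eventually_atBot_eventually_nhds [NoMinOrder α] (h : ∀ᶠ x in atBot, p x) :
    ∀ᶠ x in atBot, ∀ᶠ y in 𝓝 x, p y :=
  eventually_atTop_eventually_nhds (α := αᵒᵈ) h

end OrderTopology

section Wronskian

variable {E : Type*} [NormedAddCommGroup E] [NormedSpace ℝ E]

/-- The Wronskian `u f' - u' f` of a scalar function `u` and a vector-valued function `f`. It is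
built from `deriv`, so it is meaningful only where both functions are differentiable. -/
noncomputable def wronskian (u : ℝ → ℝ) (f : ℝ → E) (x : ℝ) : E :=
  u x • deriv f x - deriv u x • f x

lemma hasDerivAt_wronskian {u : ℝ → ℝ} {f : ℝ → E} {x : ℝ} (hu : DifferentiableAt ℝ u x)
    (hu' : DifferentiableAt ℝ (deriv u) x) (hf : DifferentiableAt ℝ f x)
    (hf' : DifferentiableAt ℝ (deriv f) x) :
    HasDerivAt (wronskian u f) (u x • deriv (deriv f) x - deriv (deriv u) x • f x) x := by
  refine ((hu.hasDerivAt.smul hf'.hasDerivAt).sub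
    (hu'.hasDerivAt.smul hf.hasDerivAt)).congr_deriv ?_
  abel

lemma deriv_exp_const_mul_smul (k : ℝ) (c : E) :
    deriv (fun x ↦ Real.exp (k * x) • c) = fun x ↦ Real.exp (k * x) • k • c := by
  ext x
  have h : HasDerivAt (fun x ↦ Real.exp (k * x)) (Real.exp (k * x) * k) x := by
    simpa using ((hasDerivAt_id x).const_mul k).exp
  rw [(h.smul_const c).deriv, mul_smul]

lemma deriv_exp_const_mul (k : ℝ) :
    deriv (fun x ↦ Real.exp (k * x)) = fun x ↦ k * Real.exp (k * x) := by
  simpa [mul_comm] using deriv_exp_const_mul_smul k (1 : ℝ)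

lemma deriv_deriv_exp_const_mul (k : ℝ) :
    deriv (deriv fun x ↦ Real.exp (k * x)) = fun x ↦ k ^ 2 * Real.exp (k * x) := by
  simpa [iteratedDeriv_succ] using iteratedDeriv_exp_const_mul 2 k

variable {f : ℝ → E} {c : E} {k x : ℝ}

lemma deriv_eventuallyEq_exp_smul (hf : f =ᶠ[𝓝 x] fun y ↦ Real.exp (k * y) • c) :
    deriv f =ᶠ[𝓝 x] fun y ↦ Real.exp (k * y) • k • c :=
  deriv_exp_const_mul_smul k c ▸ hf.deriv

lemma deriv_deriv_eq_sq_smul_of_eventuallyEq_exp_smul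
    (hf : f =ᶠ[𝓝 x] fun y ↦ Real.exp (k * y) • c) : deriv (deriv f) x = k ^ 2 • f x := by
  rw [(deriv_eventuallyEq_exp_smul (deriv_eventuallyEq_exp_smul hf)).eq_of_nhds, hf.eq_of_nhds]
  module

lemma wronskian_exp_of_eventuallyEq_exp_smul (a : ℝ)
    (hf : f =ᶠ[𝓝 x] fun y ↦ Real.exp (k * y) • c) :
    wronskian (fun y ↦ Real.exp (a * y)) f x = Real.exp ((a + k) * x) • (k - a) • c := by
  rw [wronskian, (deriv_eventuallyEq_exp_smul hf).eq_of_nhds, hf.eq_of_nhds,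
    deriv_exp_const_mul, add_mul, Real.exp_add]
  module

end Wronskian

section ExponentialTails

variable {E : Type*} [NormedAddCommGroup E] [NormedSpace ℝ E] {f : ℝ → E} {κ : ℝ} {c d : E}

lemma hasCompactSupport_deriv_deriv_sub_sq_smul
    (hbot : f =ᶠ[atBot] fun x ↦ Real.exp (κ * x) • c)
    (htop : f =ᶠ[atTop] fun x ↦ Real.exp (-κ * x) • d) :
    HasCompactSupport fun x ↦ deriv (deriv f) x - κ ^ 2 • f x := by
  rw [hasCompactSupport_iff_eventuallyEq, coclosedCompact_eq_cocompact, cocompact_eq_atBot_atTop]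
  refine eventually_sup.2 ⟨?_, ?_⟩
  · filter_upwards [eventually_atBot_eventually_nhds hbot] with x hx
    simp [deriv_deriv_eq_sq_smul_of_eventuallyEq_exp_smul hx]
  · filter_upwards [eventually_atTop_eventually_nhds htop] with x hx
    simp [deriv_deriv_eq_sq_smul_of_eventuallyEq_exp_smul hx]

lemma integrable_exp_smul_deriv_deriv_sub_sq_smul (hf : ContDiff ℝ 2 f)
    (hbot : f =ᶠ[atBot] fun x ↦ Real.exp (κ * x) • c)
    (htop : f =ᶠ[atTop] fun x ↦ Real.exp (-κ * x) • d) :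
    Integrable fun x ↦ Real.exp (-κ * x) • (deriv (deriv f) x - κ ^ 2 • f x) := by
  have hexp : Continuous fun x ↦ Real.exp (-κ * x) := by fun_prop
  have hf'' : Continuous (deriv (deriv f)) := (hf.deriv' (n := 1)).continuous_deriv_one
  exact (hexp.smul (hf''.sub (hf.continuous.const_smul _))).integrable_of_hasCompactSupport
    (hasCompactSupport_deriv_deriv_sub_sq_smul hbot htop).smul_left

lemma tendsto_wronskian_exp_atBot (hbot : f =ᶠ[atBot] fun x ↦ Real.exp (κ * x) • c) :
    Tendsto (wronskian (fun x ↦ Real.exp (-κ * x)) f) atBot (𝓝 ((2 * κ) • c)) := by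
  refine tendsto_const_nhds.congr' ?_
  filter_upwards [eventually_atBot_eventually_nhds hbot] with x hx
  rw [wronskian_exp_of_eventuallyEq_exp_smul _ hx]
  simp [two_mul]

lemma tendsto_wronskian_exp_atTop (htop : f =ᶠ[atTop] fun x ↦ Real.exp (κ * x) • c) :
    Tendsto (wronskian (fun x ↦ Real.exp (κ * x)) f) atTop (𝓝 0) := by
  refine tendsto_const_nhds.congr' ?_
  filter_upwards [eventually_atTop_eventually_nhds htop] with x hx
  rw [wronskian_exp_of_eventuallyEq_exp_smul _ hx, sub_self, zero_smul, smul_zero]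

theorem integral_exp_smul_deriv_deriv_sub_sq_smul [CompleteSpace E] (hf : ContDiff ℝ 2 f)
    (hbot : f =ᶠ[atBot] fun x ↦ Real.exp (κ * x) • c)
    (htop : f =ᶠ[atTop] fun x ↦ Real.exp (-κ * x) • d) :
    ∫ x, Real.exp (-κ * x) • (deriv (deriv f) x - κ ^ 2 • f x) = (-2 * κ) • c := by
  have hderiv (x : ℝ) : HasDerivAt (wronskian (fun y ↦ Real.exp (-κ * y)) f)
      (Real.exp (-κ * x) • (deriv (deriv f) x - κ ^ 2 • f x)) x := by
    refine (hasDerivAt_wronskian (by fun_prop) (by rw [deriv_exp_const_mul]; fun_prop)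
      (hf.differentiable two_ne_zero x)
      ((hf.deriv' (n := 1)).differentiable one_ne_zero x)).congr_deriv ?_
    rw [deriv_deriv_exp_const_mul]
    module
  rw [integral_of_hasDerivAt_of_tendsto hderiv
    (integrable_exp_smul_deriv_deriv_sub_sq_smul hf hbot htop)
    (tendsto_wronskian_exp_atBot hbot) (tendsto_wronskian_exp_atTop htop)]
  module

theorem bound_state_integral_general [CompleteSpace E] {V : ℝ → ℝ} (hf : ContDiff ℝ 2 f)
    (heq : ∀ x, -deriv (deriv f) x + V x • f x = -κ ^ 2 • f x)
    (hbot : f =ᶠ[atBot] fun x ↦ Real.exp (κ * x) • c)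
    (htop : f =ᶠ[atTop] fun x ↦ Real.exp (-κ * x) • d) :
    ∫ x, (V x * Real.exp (-κ * x)) • f x = (-2 * κ) • c := by
  rw [← integral_exp_smul_deriv_deriv_sub_sq_smul hf hbot htop]
  refine integral_congr_ae (.of_forall fun x ↦ ?_)
  have hV : V x • f x = deriv (deriv f) x - κ ^ 2 • f x := by
    rw [sub_eq_add_neg, ← neg_smul]
    exact neg_add_eq_iff_eq_add.1 (heq x)
  simp only [mul_comm (V x), mul_smul, hV]

end ExponentialTails

/-- Let `λ₀ < 0`, `κ = √(-λ₀)`, and let `Φ` be a bound state of `H = -d²/dx² + V`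
with eigenvalue `λ₀`, equal to `κm e^{κx}` for `x ≤ -L` and `κp e^{-κx}` for `x ≥ L`.
Then `∫ V(x) e^{-κx} Φ(x) dx = -2 κm κ = -2 κm √(-λ₀)`. -/
theorem bound_state_integral (lam₀ : ℝ) (hlam₀ : lam₀ < 0) (L : ℝ) (hL : 0 < L)
    (V : ℝ → ℝ) (hV : Continuous V) (hsupp : Function.support V ⊆ Set.Icc (-L) L)
    (Φ : ℝ → ℝ) (hΦ : ContDiff ℝ 2 Φ)
    (heq : ∀ x : ℝ, -(deriv (deriv Φ) x) + V x * Φ x = lam₀ * Φ x)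
    (κm κp : ℝ)
    (hleft : ∀ x : ℝ, x ≤ -L → Φ x = κm * Real.exp (Real.sqrt (-lam₀) * x))
    (hright : ∀ x : ℝ, L ≤ x → Φ x = κp * Real.exp (-(Real.sqrt (-lam₀) * x))) :
    ∫ x : ℝ, V x * Real.exp (-(Real.sqrt (-lam₀) * x)) * Φ x
      = -2 * κm * Real.sqrt (-lam₀) := by
  have hκ : Real.sqrt (-lam₀) ^ 2 = -lam₀ := Real.sq_sqrt (neg_nonneg.2 hlam₀.le)
  have hbot : Φ =ᶠ[atBot] fun x ↦ Real.exp (Real.sqrt (-lam₀) * x) • κm := by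
    filter_upwards [eventually_le_atBot (-L)] with x hx
    rw [hleft x hx, smul_eq_mul, mul_comm]
  have htop : Φ =ᶠ[atTop] fun x ↦ Real.exp (-Real.sqrt (-lam₀) * x) • κp := by
    filter_upwards [eventually_ge_atTop L] with x hx
    rw [hright x hx, smul_eq_mul, mul_comm, neg_mul]
  simpa [mul_right_comm] using
    bound_state_integral_general hΦ (V := V) (by simpa [hκ] using heq) hbot htop
end

section
/- Let V : ℝ → ℝ be continuous with compact support, let f > 0 and E ∈ ℝ, and let ψ : ℝ → ℂ be twice continuously differentiable, square integrable on ℝ, and satisfy -ψ''(x) + (V(x) + f x) ψ(x) = E ψ(x) for all x. Then ψ is identically zero. -/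
open MeasureTheory

open Filter Set Topology
open scoped InnerProductSpace

/-!
Far to the left the eigenvalue equation is, after reflecting the line, an oscillator `u'' = -q u`
with `q → ∞` and `q'` bounded and nonnegative. Its energy `F = ‖u'‖² + q ‖u‖²` satisfies
`F' = q' ‖u‖²`, so it is nondecreasing, and it is bounded when `u` is square integrable. By the
virial identity `(⟪u, u'⟫ / q)' = F / q - 2 ‖u‖² - q' ⟪u, u'⟫ / q²` the integrals of `F / q` are
then bounded. As `1 / q` is at least a positive multiple of `(log q)'`, this is impossible unless
`F` vanishes. So `u` and `u'` vanish at some point, hence everywhere by uniqueness for linear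
equations.
-/

section LinearODE

variable {E : Type*} [NormedAddCommGroup E] [NormedSpace ℝ E]

theorem eq_zero_of_hasDerivAt_clm {A : ℝ → E →L[ℝ] E} (hA : Continuous A) {z : ℝ → E}
    (hz : ∀ t, HasDerivAt z (A t (z t)) t) {t₀ : ℝ} (hz₀ : z t₀ = 0) : z = 0 := by
  funext t
  obtain ⟨a, ha⟩ := exists_lt (min t₀ t)
  obtain ⟨b, hb⟩ := exists_gt (max t₀ t)
  rw [lt_min_iff] at ha
  rw [max_lt_iff] at hb
  obtain ⟨C, hC⟩ := (isCompact_Icc (a := a) (b := b)).exists_bound_of_continuousOn hA.continuousOn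
  have hA_lip : ∀ s ∈ Ioo a b, LipschitzOnWith C.toNNReal (A s) univ := fun s hs =>
    ((A s).lipschitz.weaken
      (NNReal.le_toNNReal_of_coe_le (hC s (Ioo_subset_Icc_self hs)))).lipschitzOnWith
  exact ODE_solution_unique_of_mem_Icc hA_lip ⟨ha.1, hb.1⟩
    (HasDerivAt.continuousOn fun s _ => hz s) (fun s _ => hz s) (fun _ _ => mem_univ _)
    continuousOn_const (fun s _ => by simpa using hasDerivAt_const s (0 : E))
    (fun _ _ => mem_univ _) hz₀ ⟨ha.2.le, hb.2.le⟩

theorem eq_zero_of_hasDerivAt_smul {p : ℝ → ℝ} (hp : Continuous p) {u v : ℝ → E}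
    (hu : ∀ t, HasDerivAt u (v t) t) (hv : ∀ t, HasDerivAt v (p t • u t) t) {t₀ : ℝ}
    (hu₀ : u t₀ = 0) (hv₀ : v t₀ = 0) : u = 0 := by
  let A (t : ℝ) : E × E →L[ℝ] E × E :=
    (ContinuousLinearMap.snd ℝ E E).prod (p t • ContinuousLinearMap.fst ℝ E E)
  have hA : Continuous A := (ContinuousLinearMap.prodₗᵢ ℝ).continuous.comp
    (continuous_const.prodMk (hp.smul continuous_const))
  have huv : (fun t => (u t, v t)) = 0 :=
    eq_zero_of_hasDerivAt_clm hA (fun t => (hu t).prodMk (hv t)) (Prod.ext hu₀ hv₀)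
  exact funext fun t => congrArg Prod.fst (congrFun huv t)

end LinearODE

theorem eventually_hasDerivAt_zero_of_hasCompactSupport {𝕜 F : Type*} [NontriviallyNormedField 𝕜]
    [NormedAddCommGroup F] [NormedSpace 𝕜 F] {g : 𝕜 → F} (hg : HasCompactSupport g) :
    ∀ᶠ x in cocompact 𝕜, HasDerivAt g 0 x := by
  filter_upwards [hg.isCompact.compl_mem_cocompact] with x hx
  exact (hasDerivAt_const x 0).congr_of_eventuallyEq (notMem_tsupport_iff_eventuallyEq.1 hx)

theorem integrableAtFilter_atTop_comp_neg {G : Type*} [NormedAddCommGroup G] {g : ℝ → G}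
    (hg : IntegrableAtFilter g atBot) : IntegrableAtFilter (fun t => g (-t)) atTop := by
  obtain ⟨b, hb⟩ := integrableAtFilter_atBot_iff.1 hg
  rw [← neg_neg b] at hb
  exact integrableAtFilter_atTop_iff.2 ⟨-b, hb.comp_neg_Ici⟩

theorem isBoundedUnder_le_atTop_of_hasDerivAt_le {g g' φ : ℝ → ℝ}
    (hg : ∀ᶠ t in atTop, HasDerivAt g (g' t) t) (hle : ∀ᶠ t in atTop, g' t ≤ φ t)
    (hφ : IntegrableAtFilter φ atTop) : IsBoundedUnder (· ≤ ·) atTop g := by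
  obtain ⟨a, ha⟩ := eventually_atTop.1 (hg.and hle)
  obtain ⟨b, hb⟩ := integrableAtFilter_atTop_iff.1 hφ
  set c := max a b
  have hφc : IntegrableOn φ (Ici c) := hb.mono_set (Ici_subset_Ici.2 (le_max_right a b))
  have hgc : ∀ t, c ≤ t → HasDerivAt g (g' t) t ∧ g' t ≤ φ t := fun t ht =>
    ha t ((le_max_left a b).trans ht)
  refine isBoundedUnder_of_eventually_le (a := g c + ∫ t in Ici c, ‖φ t‖)
    ((eventually_ge_atTop c).mono fun t ht => ?_)
  have hftc : g t - g c ≤ ∫ s in c..t, φ s :=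
    intervalIntegral.sub_le_integral_of_hasDeriv_right_of_le ht
      (HasDerivAt.continuousOn fun s hs => (hgc s hs.1).1)
      (fun s hs => (hgc s hs.1.le).1.hasDerivWithinAt) (hφc.mono_set Icc_subset_Ici_self)
      (fun s hs => (hgc s hs.1.le).2)
  have hint : ∫ s in c..t, φ s ≤ ∫ s in Ici c, ‖φ s‖ :=
    calc ∫ s in c..t, φ s = ∫ s in Ioc c t, φ s := intervalIntegral.integral_of_le ht
      _ ≤ ‖∫ s in Ioc c t, φ s‖ := le_abs_self _
      _ ≤ ∫ s in Ioc c t, ‖φ s‖ := norm_integral_le_integral_norm _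
      _ ≤ ∫ s in Ici c, ‖φ s‖ :=
        setIntegral_mono_set hφc.norm (ae_of_all _ fun s => norm_nonneg _)
          (Ioc_subset_Ioi_self.trans Ioi_subset_Ici_self).eventuallyLE
  linarith

theorem tendsto_atBot_atBot_of_hasDerivAt_ge {g g' : ℝ → ℝ} {m : ℝ} (hm : 0 < m)
    (hg : ∀ᶠ x in atBot, HasDerivAt g (g' x) x) (hg' : ∀ᶠ x in atBot, m ≤ g' x) :
    Tendsto g atBot atBot := by
  obtain ⟨b, hb⟩ := eventually_atBot.1 (hg.and hg')
  have hderiv : ∀ y ∈ interior (Iic b), HasDerivAt g (g' y) y ∧ m ≤ g' y := fun y hy =>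
    hb y (interior_subset (s := Iic b) hy)
  have hgb : ∀ x ≤ b, g x ≤ g b - m * (b - x) := fun x hx => by
    have := (convex_Iic b).mul_sub_le_image_sub_of_le_deriv
      (HasDerivAt.continuousOn fun y hy => (hb y hy).1)
      (fun y hy => (hderiv y hy).1.differentiableAt.differentiableWithinAt)
      (fun y hy => (hderiv y hy).1.deriv.symm ▸ (hderiv y hy).2)
      x hx b self_mem_Iic hx
    linarith
  have hlin : Tendsto (fun x => m * x + (g b - m * b)) atBot atBot :=
    tendsto_atBot_add_const_right _ _ (tendsto_id.const_mul_atBot hm)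
  refine tendsto_atBot_mono' _ ((eventually_le_atBot b).mono fun x hx => ?_) hlin
  linarith [hgb x hx]

section Oscillator

variable {F : Type*} [NormedAddCommGroup F] [InnerProductSpace ℝ F]

/-- The energy `‖v‖² + q ‖u‖²` of a solution `u` of the oscillator equation `u'' = -q u` with
velocity `v = u'`. Here `q` is the squared frequency, which may depend on time. -/
def oscillatorEnergy (q : ℝ → ℝ) (u v : ℝ → F) (t : ℝ) : ℝ :=
  ‖v t‖ ^ 2 + q t * ‖u t‖ ^ 2

variable {q q' : ℝ → ℝ} {u v : ℝ → F} {t r K : ℝ}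

theorem hasDerivAt_oscillatorEnergy (hq : HasDerivAt q r t) (hu : HasDerivAt u (v t) t)
    (hv : HasDerivAt v (-q t • u t) t) :
    HasDerivAt (oscillatorEnergy q u v) (r * ‖u t‖ ^ 2) t := by
  refine (hv.norm_sq.add (hq.mul hu.norm_sq)).congr_deriv ?_
  rw [inner_smul_right, real_inner_comm]
  ring

theorem abs_inner_le_oscillatorEnergy (hq : 1 ≤ q t) :
    |⟪u t, v t⟫_ℝ| ≤ oscillatorEnergy q u v t / 2 := by
  have hamgm := two_mul_le_add_sq ‖u t‖ ‖v t‖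
  have hq_mul : ‖u t‖ ^ 2 ≤ q t * ‖u t‖ ^ 2 := le_mul_of_one_le_left (by positivity) hq
  have hcs := abs_real_inner_le_norm (u t) (v t)
  unfold oscillatorEnergy
  linarith

theorem hasDerivAt_inner_div (hq : HasDerivAt q r t) (hu : HasDerivAt u (v t) t)
    (hv : HasDerivAt v (-q t • u t) t) (hq0 : q t ≠ 0) :
    HasDerivAt (fun s => ⟪u s, v s⟫_ℝ / q s)
      (oscillatorEnergy q u v t / q t - 2 * ‖u t‖ ^ 2 - r * ⟪u t, v t⟫_ℝ / q t ^ 2) t := by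
  refine ((hu.inner ℝ hv).div hq hq0).congr_deriv ?_
  rw [inner_smul_right, real_inner_self_eq_norm_sq, real_inner_self_eq_norm_sq, oscillatorEnergy]
  field_simp
  ring

theorem mul_inner_div_sq_le_oscillatorEnergy (hq : 1 ≤ q t) (hr : r ∈ Icc 0 (q t)) :
    r * ⟪u t, v t⟫_ℝ / q t ^ 2 ≤ oscillatorEnergy q u v t / (2 * q t) := by
  have hinner := abs_inner_le_oscillatorEnergy (u := u) (v := v) hq
  calc r * ⟪u t, v t⟫_ℝ / q t ^ 2
      ≤ q t * (oscillatorEnergy q u v t / 2) / q t ^ 2 := by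
        refine div_le_div_of_nonneg_right ?_ (sq_nonneg _)
        calc r * ⟪u t, v t⟫_ℝ ≤ r * |⟪u t, v t⟫_ℝ| := mul_le_mul_of_nonneg_left (le_abs_self _) hr.1
          _ ≤ q t * (oscillatorEnergy q u v t / 2) :=
            mul_le_mul hr.2 hinner (abs_nonneg _) (hr.1.trans hr.2)
    _ = oscillatorEnergy q u v t / (2 * q t) := by field_simp

theorem mul_div_le_mul_oscillatorEnergy_sub {c : ℝ} (hq : 1 ≤ q t) (hKq : K ≤ q t)
    (hr : r ∈ Icc 0 K) (hc : 0 ≤ c) (hcE : c ≤ oscillatorEnergy q u v t) :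
    c * (r / q t) ≤
      2 * K * (oscillatorEnergy q u v t / q t - r * ⟪u t, v t⟫_ℝ / q t ^ 2) := by
  set e := oscillatorEnergy q u v t
  have hcross : r * ⟪u t, v t⟫_ℝ / q t ^ 2 ≤ e / (2 * q t) :=
    mul_inner_div_sq_le_oscillatorEnergy hq ⟨hr.1, hr.2.trans hKq⟩
  have hK : 0 ≤ 2 * K := by linarith [hr.1.trans hr.2]
  calc c * (r / q t) = c * r / q t := by ring
    _ ≤ e * K / q t :=
      div_le_div_of_nonneg_right (mul_le_mul hcE hr.2 hr.1 (hc.trans hcE)) (by positivity)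
    _ = 2 * K * (e / q t - e / (2 * q t)) := by
      field_simp
      ring
    _ ≤ 2 * K * (e / q t - r * ⟪u t, v t⟫_ℝ / q t ^ 2) :=
      mul_le_mul_of_nonneg_left (by linarith) hK

theorem isBoundedUnder_le_oscillatorEnergy (hq : ∀ᶠ t in atTop, HasDerivAt q (q' t) t)
    (hq' : ∀ᶠ t in atTop, q' t ≤ K) (hu : ∀ᶠ t in atTop, HasDerivAt u (v t) t)
    (hv : ∀ᶠ t in atTop, HasDerivAt v (-q t • u t) t)
    (hu2 : IntegrableAtFilter (fun t => ‖u t‖ ^ 2) atTop) :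
    IsBoundedUnder (· ≤ ·) atTop (oscillatorEnergy q u v) := by
  refine isBoundedUnder_le_atTop_of_hasDerivAt_le (g' := fun t => q' t * ‖u t‖ ^ 2) ?_ ?_
    (hu2.smul K)
  · filter_upwards [hq, hu, hv] with t hqt hut hvt using hasDerivAt_oscillatorEnergy hqt hut hvt
  · filter_upwards [hq'] with t hqt using mul_le_mul_of_nonneg_right hqt (by positivity)

theorem eventually_monotoneOn_oscillatorEnergy (hq : ∀ᶠ t in atTop, HasDerivAt q (q' t) t)
    (hq' : ∀ᶠ t in atTop, 0 ≤ q' t) (hu : ∀ᶠ t in atTop, HasDerivAt u (v t) t)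
    (hv : ∀ᶠ t in atTop, HasDerivAt v (-q t • u t) t) :
    ∀ᶠ a in atTop, MonotoneOn (oscillatorEnergy q u v) (Ici a) := by
  filter_upwards [eventually_forall_ge_atTop.2 (hq.and (hq'.and (hu.and hv)))] with a ha
  have hderiv : ∀ t ∈ Ici a, HasDerivAt (oscillatorEnergy q u v) (q' t * ‖u t‖ ^ 2) t :=
    fun t ht =>
      have ⟨hqt, _, hut, hvt⟩ := ha t ht
      hasDerivAt_oscillatorEnergy hqt hut hvt
  refine monotoneOn_of_hasDerivWithinAt_nonneg (convex_Ici a) (HasDerivAt.continuousOn hderiv)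
    (fun t ht => (hderiv t (interior_subset ht)).hasDerivWithinAt) fun t ht => ?_
  exact mul_nonneg (ha t (interior_subset ht)).2.1 (by positivity)

theorem isBoundedUnder_le_inner_div (hq : ∀ᶠ t in atTop, 1 ≤ q t)
    (henergy : IsBoundedUnder (· ≤ ·) atTop (oscillatorEnergy q u v)) :
    IsBoundedUnder (· ≤ ·) atTop fun t => ⟪u t, v t⟫_ℝ / q t := by
  obtain ⟨M, hM⟩ := henergy.eventually_le
  refine isBoundedUnder_of_eventually_le (a := M / 2) ?_
  filter_upwards [hq, hM] with t hqt hMt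
  calc ⟪u t, v t⟫_ℝ / q t ≤ |⟪u t, v t⟫_ℝ| / q t :=
        div_le_div_of_nonneg_right (le_abs_self _) (by positivity)
    _ ≤ |⟪u t, v t⟫_ℝ| := div_le_self (abs_nonneg _) hqt
    _ ≤ oscillatorEnergy q u v t / 2 := abs_inner_le_oscillatorEnergy hqt
    _ ≤ M / 2 := by linarith

theorem not_eventually_le_oscillatorEnergy (hq : ∀ᶠ t in atTop, HasDerivAt q (q' t) t)
    (hq' : ∀ᶠ t in atTop, q' t ∈ Icc 0 K) (hq_top : Tendsto q atTop atTop)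
    (hu : ∀ᶠ t in atTop, HasDerivAt u (v t) t) (hv : ∀ᶠ t in atTop, HasDerivAt v (-q t • u t) t)
    (hu2 : IntegrableAtFilter (fun t => ‖u t‖ ^ 2) atTop) {c : ℝ} (hc : 0 < c) :
    ¬ ∀ᶠ t in atTop, c ≤ oscillatorEnergy q u v t := by
  intro hcE
  have hq1 := hq_top.eventually_ge_atTop 1
  have hvirial : IsBoundedUnder (· ≤ ·) atTop
      fun t => c * Real.log (q t) - 2 * K * (⟪u t, v t⟫_ℝ / q t) := by
    refine isBoundedUnder_le_atTop_of_hasDerivAt_le ?_ ?_ (hu2.smul (4 * K))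
      (g' := fun t => c * (q' t / q t) - 2 * K * (oscillatorEnergy q u v t / q t -
        2 * ‖u t‖ ^ 2 - q' t * ⟪u t, v t⟫_ℝ / q t ^ 2))
    · filter_upwards [hq, hu, hv, hq1] with t hqt hut hvt hq1t
      have hq0 : q t ≠ 0 := by positivity
      exact ((hqt.log hq0).const_mul c).sub ((hasDerivAt_inner_div hqt hut hvt hq0).const_mul _)
    · filter_upwards [hq', hq_top.eventually_ge_atTop K, hq1, hcE] with t hq't hKq hq1t hcEt
      rw [Pi.smul_apply, smul_eq_mul]
      linarith [mul_div_le_mul_oscillatorEnergy_sub hq1t hKq hq't hc.le hcEt]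
  obtain ⟨B, hB⟩ := hvirial.eventually_le
  obtain ⟨M, hM⟩ := (isBoundedUnder_le_inner_div hq1 (isBoundedUnder_le_oscillatorEnergy hq
    (hq'.mono fun _ h => h.2) hu hv hu2)).eventually_le
  have hlog : ∀ᶠ t in atTop, c * Real.log (q t) ≤ B + 2 * K * M := by
    filter_upwards [hB, hM, hq'] with t hBt hMt hq't
    have hK : 0 ≤ K := hq't.1.trans hq't.2
    linarith [mul_le_mul_of_nonneg_left hMt (by positivity : 0 ≤ 2 * K)]
  exact not_isBoundedUnder_of_tendsto_atTop
    ((Real.tendsto_log_atTop.comp hq_top).const_mul_atTop hc) (isBoundedUnder_of_eventually_le hlog)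

theorem eventually_eq_zero_of_integrableAtFilter_norm_sq
    (hq : ∀ᶠ t in atTop, HasDerivAt q (q' t) t)
    (hq' : ∀ᶠ t in atTop, q' t ∈ Icc 0 K) (hq_top : Tendsto q atTop atTop)
    (hu : ∀ᶠ t in atTop, HasDerivAt u (v t) t) (hv : ∀ᶠ t in atTop, HasDerivAt v (-q t • u t) t)
    (hu2 : IntegrableAtFilter (fun t => ‖u t‖ ^ 2) atTop) :
    ∀ᶠ t in atTop, u t = 0 ∧ v t = 0 := by
  filter_upwards [hq_top.eventually_ge_atTop 1,
    eventually_monotoneOn_oscillatorEnergy hq (hq'.mono fun _ h => h.1) hu hv] with a hq1 hmono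
  have henergy : oscillatorEnergy q u v a ≤ 0 := by
    by_contra! hpos
    exact not_eventually_le_oscillatorEnergy hq hq' hq_top hu hv hu2 hpos
      ((eventually_ge_atTop a).mono fun t ht => hmono self_mem_Ici ht ht)
  rw [oscillatorEnergy] at henergy
  have hv0 : 0 ≤ ‖v a‖ ^ 2 := by positivity
  have hu0 : ‖u a‖ ^ 2 ≤ q a * ‖u a‖ ^ 2 := le_mul_of_one_le_left (by positivity) hq1
  have hu0' : 0 ≤ ‖u a‖ ^ 2 := by positivity
  exact ⟨by simpa using (by linarith : ‖u a‖ ^ 2 = 0), by simpa using (by linarith : ‖v a‖ ^ 2 = 0)⟩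

end Oscillator

theorem schrodinger_solution_eq_zero_of_tendsto_atBot {F : Type*} [NormedAddCommGroup F]
    [InnerProductSpace ℝ F] {W W' : ℝ → ℝ} {K : ℝ} (hW : Continuous W)
    (hWd : ∀ᶠ x in atBot, HasDerivAt W (W' x) x) (hW' : ∀ᶠ x in atBot, W' x ∈ Icc 0 K)
    (hW_bot : Tendsto W atBot atBot) {ψ ψ' : ℝ → F} (hψ : ∀ x, HasDerivAt ψ (ψ' x) x)
    (hψ' : ∀ x, HasDerivAt ψ' (W x • ψ x) x)
    (hψ2 : IntegrableAtFilter (fun x => ‖ψ x‖ ^ 2) atBot) : ψ = 0 := by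
  have hneg := tendsto_neg_atTop_atBot (G := ℝ)
  have hvanish : ∀ᶠ t in atTop, ψ (-t) = 0 ∧ -ψ' (-t) = 0 := by
    refine eventually_eq_zero_of_integrableAtFilter_norm_sq (q := fun t => -W (-t))
      (q' := fun t => W' (-t)) ?_ (hneg.eventually hW')
      (tendsto_neg_atBot_atTop.comp (hW_bot.comp hneg)) (.of_forall fun t => ?_)
      (.of_forall fun t => ?_) (integrableAtFilter_atTop_comp_neg hψ2)
    · filter_upwards [hneg.eventually hWd] with t ht
      simpa [Function.comp_def] using! (ht.scomp t (hasDerivAt_neg t)).neg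
    · simpa [Function.comp_def] using! (hψ (-t)).scomp t (hasDerivAt_neg t)
    · simpa [Function.comp_def] using! ((hψ' (-t)).scomp t (hasDerivAt_neg t)).neg
  obtain ⟨t, hψt, hψ't⟩ := hvanish.exists
  exact eq_zero_of_hasDerivAt_smul hW hψ hψ' hψt (neg_eq_zero.1 hψ't)

theorem stark_no_eigenvalues_general {F : Type*} [NormedAddCommGroup F] [InnerProductSpace ℝ F]
    {V V' : ℝ → ℝ} (hV : Continuous V) (hVd : ∀ᶠ x in atBot, HasDerivAt V (V' x) x)
    (hV' : Tendsto V' atBot (𝓝 0)) {f E : ℝ} (hf : 0 < f) {ψ ψ' ψ'' : ℝ → F}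
    (hψ : ∀ x, HasDerivAt ψ (ψ' x) x) (hψ' : ∀ x, HasDerivAt ψ' (ψ'' x) x)
    (heq : ∀ x, -ψ'' x + (V x + f * x) • ψ x = E • ψ x)
    (hψ2 : IntegrableAtFilter (fun x => ‖ψ x‖ ^ 2) atBot) : ψ = 0 := by
  have hWd : ∀ᶠ x in atBot, HasDerivAt (fun x => V x + f * x - E) (V' x + f) x := by
    filter_upwards [hVd] with x hx
    simpa using (hx.add ((hasDerivAt_id x).const_mul f)).sub_const E
  have hW' : ∀ᶠ x in atBot, V' x + f ∈ Icc (f / 2) (2 * f) := by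
    filter_upwards [hV'.eventually (Icc_mem_nhds (by linarith : -(f / 2) < 0) hf)] with x hx
    constructor <;> linarith [hx.1, hx.2]
  have hψ'' : ∀ x, ψ'' x = (V x + f * x - E) • ψ x := fun x => by
    rw [sub_smul, ← heq x]
    abel
  exact schrodinger_solution_eq_zero_of_tendsto_atBot (by fun_prop) hWd
    (hW'.mono fun x hx => ⟨(half_pos hf).le.trans hx.1, hx.2⟩)
    (tendsto_atBot_atBot_of_hasDerivAt_ge (half_pos hf) hWd (hW'.mono fun x hx => hx.1))
    hψ (fun x => hψ'' x ▸ hψ' x) hψ2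

/-- The one-dimensional Stark Hamiltonian `H_f = -d²/dx² + V(x) + f x` with constant
field `f > 0` and compactly supported continuous real potential `V` has no eigenvalues:
every square-integrable `C²` solution of the eigenvalue equation vanishes identically. -/
theorem stark_no_eigenvalues (V : ℝ → ℝ) (hV : Continuous V)
    (hsupp : HasCompactSupport V)
    (f E : ℝ) (hf : 0 < f)
    (ψ : ℝ → ℂ) (hψ : ContDiff ℝ 2 ψ)
    (hψL2 : MemLp ψ 2 (volume : Measure ℝ))
    (heq : ∀ x : ℝ, -(deriv (deriv ψ) x) + ((V x : ℂ) + (f : ℂ) * x) * ψ x = (E : ℂ) * ψ x) :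
    ∀ x : ℝ, ψ x = 0 := by
  exact congrFun <| stark_no_eigenvalues_general hV
    ((eventually_hasDerivAt_zero_of_hasCompactSupport hsupp).filter_mono atBot_le_cocompact)
    tendsto_const_nhds hf (fun x => (hψ.differentiable two_ne_zero x).hasDerivAt)
    (fun x => (hψ.differentiable_deriv_two x).hasDerivAt) (fun x => by simpa using heq x)
    ((hψL2.integrable_norm_pow two_ne_zero).integrableAtFilter _)
end
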